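/- arXiv:1504.06832 — 4 statements merged into one kernel-verified Lean document; each statement's English description precedes it below -/
import Mathlib

section
/- Fix an integer k ≥ 1. There exists a constant c > 0, depending only on q, ζ₋, ζ₊ and k, such that for every N > k and every X ∈ 𝔾_N, Σ over Y ∈ 𝔾_{N−1} satisfying y_{(i)} = x_{(i)} for all i = 1,…,k of Λ^N_{N−1}(X,Y) is at least 1 − e^{−cN}/c, where (x_{(i)}) and (y_{(i)}) are the variational series of X and Y respectively. -/
open scoped BigOperators
open Classical

noncomputable section

/-- The double q-lattice Λ = {ζ₋ qᵐ} ∪ {ζ₊ qⁿ}. -/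
def Lambda (q zm zp : ℝ) : Set ℝ :=
  {x | ∃ m : ℤ, x = zm * q ^ m} ∪ {x | ∃ n : ℤ, x = zp * q ^ n}

/-- The interval I(a,b) of the double q-lattice. -/
def qInterval (q zm zp a b : ℝ) : Set ℝ :=
  if b < 0 then Set.Ico a b ∩ Lambda q zm zp
  else if a < 0 then Set.Icc a b ∩ Lambda q zm zp
  else Set.Ioc a b ∩ Lambda q zm zp

/-- N-point configurations on the lattice. -/
def Conf (q zm zp : ℝ) (N : ℕ) : Type :=
  {x : Fin N → ℝ // StrictMono x ∧ ∀ i, x i ∈ Lambda q zm zp}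

/-- Interlacement Y ≺ X. -/
def Interlaces (q zm zp : ℝ) {N : ℕ} (Y : Conf q zm zp N) (X : Conf q zm zp (N+1)) : Prop :=
  ∀ i : Fin N, Y.1 i ∈ qInterval q zm zp (X.1 i.castSucc) (X.1 i.succ)

/-- Vandermonde-type product ∏_{i<j} (x_j - x_i). -/
def vprod {N : ℕ} (x : Fin N → ℝ) : ℝ :=
  ∏ p ∈ Finset.univ.filter (fun p : Fin N × Fin N => p.1 < p.2), (x p.2 - x p.1)

/-- finite q-Pochhammer symbol (a;q)_n, real version. -/
def qpochR (a q : ℝ) (n : ℕ) : ℝ := ∏ m ∈ Finset.range n, (1 - a * q ^ m)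

/-- The q-link Λ^{N+1}_N. -/
def qlink (q zm zp : ℝ) (N : ℕ) (X : Conf q zm zp (N+1)) (Y : Conf q zm zp N) : ℝ :=
  if Interlaces q zm zp Y X then
    (∏ i, |Y.1 i|) * qpochR q q N * vprod Y.1 / vprod X.1
  else 0


/-- comparison in the variational order: |a| < |b|, or |a| = |b| and a ≤ b
(so that among two points of equal absolute value the positive one is "bigger"). -/
def varLE (a b : ℝ) : Prop := |a| < |b| ∨ (|a| = |b| ∧ a ≤ b)

/-- v : Fin N → ℝ is the variational series of the configuration X: a rearrangement of
the points of X listed in decreasing order of absolute value, positive points first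
among equal absolute values. -/
def IsVarSeries (q zm zp : ℝ) {N : ℕ} (X : Conf q zm zp N) (v : Fin N → ℝ) : Prop :=
  (∃ σ : Equiv.Perm (Fin N), v = X.1 ∘ σ) ∧ ∀ i j : Fin N, i < j → varLE (v j) (v i)


/-- The decreasing (in modulus) geometric ray started at `a`. -/
def qray (q a : ℝ) : Set ℝ := {t | ∃ n : ℕ, t = a * q ^ n}

section lattice
variable {q zm zp : ℝ}

lemma lam_ne_zero (hq0 : 0 < q) (hzm : zm < 0) (hzp : 0 < zp) {t : ℝ}
    (ht : t ∈ Lambda q zm zp) : t ≠ 0 := by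
  rcases ht with ⟨m, rfl⟩ | ⟨m, rfl⟩
  · exact mul_ne_zero hzm.ne (zpow_pos hq0 m).ne'
  · exact mul_ne_zero hzp.ne' (zpow_pos hq0 m).ne'

lemma ray_aux (hq0 : 0 < q) (hq1 : q < 1) {z : ℝ} (hz : z ≠ 0) {m n : ℤ}
    (h : |z * q ^ m| ≤ |z * q ^ n|) : z * q ^ m ∈ qray q (z * q ^ n) := by
  rw [abs_mul, abs_mul, abs_of_pos (zpow_pos hq0 m), abs_of_pos (zpow_pos hq0 n)] at h
  have h1 : q ^ m ≤ q ^ n := le_of_mul_le_mul_left h (abs_pos.mpr hz)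
  have h2 : n ≤ m := (zpow_le_zpow_iff_right_of_lt_one₀ hq0 hq1).1 h1
  obtain ⟨d, hd⟩ := Int.le.dest h2
  refine ⟨d, ?_⟩
  rw [← hd, zpow_add₀ hq0.ne', zpow_natCast, mul_assoc]

lemma lam_ray (hq0 : 0 < q) (hq1 : q < 1) (hzm : zm < 0) (hzp : 0 < zp) {t a : ℝ}
    (ht : t ∈ Lambda q zm zp) (ha : a ∈ Lambda q zm zp) (hs : 0 < t * a) (h : |t| ≤ |a|) :
    t ∈ qray q a := by
  rcases ht with ⟨m, rfl⟩ | ⟨m, rfl⟩ <;> rcases ha with ⟨n, rfl⟩ | ⟨n, rfl⟩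
  · exact ray_aux hq0 hq1 hzm.ne h
  · exfalso
    have h1 := mul_neg_of_neg_of_pos hzm (zpow_pos hq0 m)
    have h2 := mul_pos hzp (zpow_pos hq0 n)
    nlinarith
  · exfalso
    have h1 := mul_neg_of_neg_of_pos hzm (zpow_pos hq0 n)
    have h2 := mul_pos hzp (zpow_pos hq0 m)
    nlinarith
  · exact ray_aux hq0 hq1 hzp.ne' h

lemma ray_sub (hq0 : 0 < q) {t a : ℝ}
    (ha : a ∈ Lambda q zm zp) (h : t ∈ qray q a) : t ∈ Lambda q zm zp := by
  obtain ⟨d, rfl⟩ := h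
  rcases ha with ⟨n, rfl⟩ | ⟨n, rfl⟩
  · left; exact ⟨n + d, by rw [zpow_add₀ hq0.ne', zpow_natCast, mul_assoc]⟩
  · right; exact ⟨n + d, by rw [zpow_add₀ hq0.ne', zpow_natCast, mul_assoc]⟩

lemma ray_sign (hq0 : 0 < q) {t a : ℝ} (ha : a ≠ 0) (h : t ∈ qray q a) : 0 < t * a := by
  obtain ⟨d, rfl⟩ := h
  have := pow_pos hq0 d
  have := mul_self_pos.2 ha
  nlinarith [mul_pos ‹0 < q ^ d› this]

lemma ray_abs (hq0 : 0 < q) (hq1 : q < 1) {t a : ℝ} (h : t ∈ qray q a) : |t| ≤ |a| := by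
  obtain ⟨d, rfl⟩ := h
  rw [abs_mul, abs_of_pos (pow_pos hq0 d)]
  exact mul_le_of_le_one_right (abs_nonneg _) (pow_le_one₀ hq0.le hq1.le)

lemma ray_pos_iff (hq0 : 0 < q) (hq1 : q < 1) (hzm : zm < 0) (hzp : 0 < zp) {t a : ℝ}
    (ha : a ∈ Lambda q zm zp) (h : 0 < a) :
    t ∈ qray q a ↔ t ∈ Lambda q zm zp ∧ 0 < t ∧ t ≤ a := by
  constructor
  · intro ht
    have h1 : 0 < t := (mul_pos_iff_of_pos_right h).1 (ray_sign hq0 h.ne' ht)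
    have h2 := ray_abs hq0 hq1 ht
    rw [abs_of_pos h1, abs_of_pos h] at h2
    exact ⟨ray_sub hq0 ha ht, h1, h2⟩
  · rintro ⟨h1, h2, h3⟩
    exact lam_ray hq0 hq1 hzm hzp h1 ha (mul_pos h2 h) (by rwa [abs_of_pos h2, abs_of_pos h])

lemma ray_neg_iff (hq0 : 0 < q) (hq1 : q < 1) (hzm : zm < 0) (hzp : 0 < zp) {t a : ℝ}
    (ha : a ∈ Lambda q zm zp) (h : a < 0) :
    t ∈ qray q a ↔ t ∈ Lambda q zm zp ∧ t < 0 ∧ a ≤ t := by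
  constructor
  · intro ht
    have h1 : t < 0 := by
      have := ray_sign hq0 h.ne ht
      by_contra h'
      nlinarith
    have h2 := ray_abs hq0 hq1 ht
    rw [abs_of_neg h1, abs_of_neg h] at h2
    exact ⟨ray_sub hq0 ha ht, h1, by linarith⟩
  · rintro ⟨h1, h2, h3⟩
    exact lam_ray hq0 hq1 hzm hzp h1 ha (mul_pos_of_neg_of_neg h2 h)
      (by rw [abs_of_neg h2, abs_of_neg h]; linarith)

/-- gap between consecutive lattice points of the same sign -/
lemma lam_gap (hq0 : 0 < q) (hq1 : q < 1) (hzm : zm < 0) (hzp : 0 < zp) {t a : ℝ}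
    (ht : t ∈ Lambda q zm zp) (ha : a ∈ Lambda q zm zp) (hs : 0 < t * a) (h : |t| < |a|) :
    |t| ≤ q * |a| := by
  obtain ⟨d, rfl⟩ := lam_ray hq0 hq1 hzm hzp ht ha hs h.le
  rcases d with _ | d
  · simp at h
  · rw [abs_mul, abs_of_pos (pow_pos hq0 _), pow_succ]
    have : q ^ d ≤ 1 := pow_le_one₀ hq0.le hq1.le
    nlinarith [mul_nonneg (abs_nonneg a) hq0.le]

lemma indicator_identity (hq0 : 0 < q) (hq1 : q < 1) (hzm : zm < 0) (hzp : 0 < zp) {a b : ℝ}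
    (ha : a ∈ Lambda q zm zp) (hb : b ∈ Lambda q zm zp) (hab : a < b) (j : ℕ) (t : ℝ) :
    (if t ∈ qInterval q zm zp a b then |t| else 0) * t ^ j =
      (if t ∈ qray q b then t ^ (j + 1) else 0) - (if t ∈ qray q a then t ^ (j + 1) else 0) := by
  have ha0 := lam_ne_zero hq0 hzm hzp ha
  have hb0 := lam_ne_zero hq0 hzm hzp hb
  unfold qInterval
  by_cases hL : t ∈ Lambda q zm zp
  · have ht0 := lam_ne_zero hq0 hzm hzp hL
    rcases lt_or_gt_of_ne hb0 with hb1 | hb1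
    · have ha1 : a < 0 := hab.trans hb1
      rw [if_pos hb1, ray_neg_iff hq0 hq1 hzm hzp ha ha1, ray_neg_iff hq0 hq1 hzm hzp hb hb1]
      simp only [Set.mem_inter_iff, Set.mem_Ico, hL, and_true, true_and]
      rcases lt_or_gt_of_ne ht0 with ht | ht
      · rw [abs_of_neg ht]
        simp only [ht, true_and]
        by_cases h1 : a ≤ t <;> by_cases h2 : b ≤ t
        · simp [h1, h2]
        · simp [h1, h2, not_le.1 h2]; ring
        · exact absurd (hab.le.trans h2) h1
        · simp [h1, h2]
      · simp [ht.not_gt, (hb1.trans ht).not_gt]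
    · rw [if_neg hb1.not_gt, ray_pos_iff hq0 hq1 hzm hzp hb hb1]
      rcases lt_or_gt_of_ne ha0 with ha1 | ha1
      · rw [if_pos ha1, ray_neg_iff hq0 hq1 hzm hzp ha ha1]
        simp only [Set.mem_inter_iff, Set.mem_Icc, hL, and_true, true_and]
        rcases lt_or_gt_of_ne ht0 with ht | ht
        · rw [abs_of_neg ht]
          simp only [ht, ht.not_gt, (ht.trans hb1).le, true_and, and_true]
          by_cases h1 : a ≤ t
          · simp [h1]; ring
          · simp [h1]
        · rw [abs_of_pos ht]
          simp only [ht, ht.not_gt, (ha1.trans ht).le, true_and, false_and]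
          by_cases h1 : t ≤ b
          · simp [h1]; ring
          · simp [h1]
      · rw [if_neg ha1.not_gt, ray_pos_iff hq0 hq1 hzm hzp ha ha1]
        simp only [Set.mem_inter_iff, Set.mem_Ioc, hL, and_true, true_and]
        rcases lt_or_gt_of_ne ht0 with ht | ht
        · simp [ht.not_gt, (ht.trans ha1).not_gt]
        · rw [abs_of_pos ht]
          simp only [ht, true_and]
          by_cases h1 : t ≤ a <;> by_cases h2 : t ≤ b
          · simp [h1, h2]
          · exact absurd (h1.trans hab.le) h2
          · simp [h1, h2, not_le.1 h1]; ring
          · simp [h1, h2]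
  · have h1 : t ∉ qray q a := fun h => hL (ray_sub hq0 ha h)
    have h2 : t ∉ qray q b := fun h => hL (ray_sub hq0 hb h)
    split_ifs <;> simp_all

lemma hasSum_ray (hq0 : 0 < q) (hq1 : q < 1) {a : ℝ} (ha : a ≠ 0) (j : ℕ) :
    HasSum (fun t : ℝ => if t ∈ qray q a then t ^ (j + 1) else 0)
      (a ^ (j + 1) / (1 - q ^ (j + 1))) := by
  have hinj : Function.Injective (fun n : ℕ => a * q ^ n) := by
    intro m n h
    have h' : q ^ m = q ^ n := mul_left_cancel₀ ha h
    exact (pow_right_injective₀ hq0 hq1.ne) h'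
  rw [← hinj.hasSum_iff]
  · have hg := (hasSum_geometric_of_lt_one (pow_nonneg hq0.le (j + 1))
      (pow_lt_one₀ hq0.le hq1 (Nat.succ_ne_zero j))).mul_left (a ^ (j + 1))
    rw [div_eq_mul_inv]
    refine (congrArg (fun F => HasSum F _) (funext fun n => ?_)).mpr hg
    have : a * q ^ n ∈ qray q a := ⟨n, rfl⟩
    simp only [Function.comp, this, if_true]
    rw [mul_pow, ← pow_mul, ← pow_mul, mul_comm n]
  · intro t ht
    rw [if_neg]
    rintro ⟨n, rfl⟩
    exact ht ⟨n, rfl⟩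

lemma hasSum_interval (hq0 : 0 < q) (hq1 : q < 1) (hzm : zm < 0) (hzp : 0 < zp) {a b : ℝ}
    (ha : a ∈ Lambda q zm zp) (hb : b ∈ Lambda q zm zp) (hab : a < b) (j : ℕ) :
    HasSum (fun t : ℝ => (if t ∈ qInterval q zm zp a b then |t| else 0) * t ^ j)
      ((b ^ (j + 1) - a ^ (j + 1)) / (1 - q ^ (j + 1))) := by
  simp_rw [indicator_identity hq0 hq1 hzm hzp ha hb hab j]
  rw [sub_div]
  exact (hasSum_ray hq0 hq1 (lam_ne_zero hq0 hzm hzp hb) j).sub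
    (hasSum_ray hq0 hq1 (lam_ne_zero hq0 hzm hzp ha) j)

lemma hasSum_pi_prod : ∀ {M : ℕ} (f : Fin M → ℝ → ℝ) (s : Fin M → ℝ)
    (_ : ∀ i, HasSum (f i) (s i)),
    HasSum (fun y : Fin M → ℝ => ∏ i, f i (y i)) (∏ i, s i)
  | 0, f, s, _ => by
      simp
  | M + 1, f, s, h => by
      have ih := hasSum_pi_prod (fun i => f i.succ) (fun i => s i.succ) (fun i => h i.succ)
      have hs := summable_mul_of_summable_norm (h 0).summable.norm ih.summable.norm
      have h2 := (h 0).mul ih hs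
      rw [Fin.prod_univ_succ]
      rw [← (Fin.consEquiv (fun _ : Fin (M + 1) => ℝ)).hasSum_iff]
      refine (congrArg (fun F => HasSum F _) (funext fun y => ?_)).mpr h2
      simp [Fin.consEquiv, Fin.prod_univ_succ]

end lattice

section vander

lemma vprod_eq_det {N : ℕ} (x : Fin N → ℝ) : vprod x = (Matrix.vandermonde x).det := by
  rw [Matrix.det_vandermonde, vprod, Finset.prod_filter, ← Finset.univ_product_univ,
    Finset.prod_product]
  refine Finset.prod_congr rfl fun i _ => ?_
  rw [← Finset.prod_filter]
  refine Finset.prod_congr ?_ fun _ _ => rfl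
  ext j; simp

lemma vprod_pos {N : ℕ} {x : Fin N → ℝ} (h : StrictMono x) : 0 < vprod x := by
  refine Finset.prod_pos fun p hp => ?_
  have := h (Finset.mem_filter.1 hp).2
  linarith

lemma vprod_succ_det {M : ℕ} (x : Fin (M + 1) → ℝ) :
    vprod x = Matrix.det (Matrix.of fun i j : Fin M =>
      (x i.succ) ^ ((j : ℕ) + 1) - (x i.castSucc) ^ ((j : ℕ) + 1)) := by
  rw [vprod_eq_det]
  let B : Matrix (Fin (M + 1)) (Fin (M + 1)) ℝ := Matrix.of fun i j =>
    Fin.cases (x 0 ^ (j : ℕ)) (fun i => x i.succ ^ (j : ℕ) - x i.castSucc ^ (j : ℕ)) i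
  rw [Matrix.det_eq_of_forall_row_eq_smul_add_pred (B := B) (fun _ => 1)]
  · rw [Matrix.det_succ_column_zero, Fin.sum_univ_succ]
    simp only [B, Matrix.of_apply]
    simp
    congr 1
  · intro j; simp [B, Matrix.vandermonde]
  · intro i j; simp [B, Matrix.vandermonde]

lemma qpoch_eq (q : ℝ) (M : ℕ) : qpochR q q M = ∏ j : Fin M, (1 - q ^ ((j : ℕ) + 1)) := by
  rw [qpochR, Finset.prod_range]
  refine Finset.prod_congr rfl fun j _ => ?_
  rw [pow_succ']

lemma qpoch_pos {q : ℝ} (hq0 : 0 < q) (hq1 : q < 1) (M : ℕ) : 0 < qpochR q q M := by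
  rw [qpoch_eq]
  refine Finset.prod_pos fun j _ => ?_
  have : q ^ ((j : ℕ) + 1) < 1 := pow_lt_one₀ hq0.le hq1 (Nat.succ_ne_zero j)
  linarith

/-- The weight of the q-link extended to all real vectors. -/
def wt (q zm zp : ℝ) {M : ℕ} (x : Fin (M + 1) → ℝ) (y : Fin M → ℝ) : ℝ :=
  (∏ i, (if y i ∈ qInterval q zm zp (x i.castSucc) (x i.succ) then |y i| else 0)) *
    vprod y * qpochR q q M / vprod x

lemma hasSum_wt {q zm zp : ℝ} (hq0 : 0 < q) (hq1 : q < 1) (hzm : zm < 0) (hzp : 0 < zp) {M : ℕ}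
    (x : Fin (M + 1) → ℝ) (hx : StrictMono x) (hL : ∀ i, x i ∈ Lambda q zm zp) :
    HasSum (fun y : Fin M → ℝ => wt q zm zp x y) 1 := by
  have hV := vprod_pos hx
  have hQ := qpoch_pos hq0 hq1 M
  let f : Fin M → ℝ → ℝ := fun i t =>
    if t ∈ qInterval q zm zp (x i.castSucc) (x i.succ) then |t| else 0
  let D : Matrix (Fin M) (Fin M) ℝ := Matrix.of fun i j : Fin M =>
      ((x i.succ) ^ ((j : ℕ) + 1) - (x i.castSucc) ^ ((j : ℕ) + 1)) / (1 - q ^ ((j : ℕ) + 1))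
  have h1 : ∀ y : Fin M → ℝ, (∏ i, f i (y i)) * vprod y =
      ∑ σ : Equiv.Perm (Fin M), ((Equiv.Perm.sign σ : ℤ) : ℝ) *
        ∏ i, (f i (y i) * y i ^ ((σ i : Fin M) : ℕ)) := by
    intro y
    rw [vprod_eq_det, ← Matrix.det_mul_column, ← Matrix.det_transpose, Matrix.det_apply']
    rfl
  have h2 : D.det = ∑ σ : Equiv.Perm (Fin M), ((Equiv.Perm.sign σ : ℤ) : ℝ) * ∏ i, D i (σ i) := by
    rw [← Matrix.det_transpose, Matrix.det_apply']
    rfl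
  have h3 : HasSum (fun y : Fin M → ℝ => (∏ i, f i (y i)) * vprod y) D.det := by
    simp_rw [h1]
    rw [h2]
    refine hasSum_sum fun σ _ => ?_
    refine HasSum.mul_left _ ?_
    refine hasSum_pi_prod (fun i t => f i t * t ^ ((σ i : Fin M) : ℕ)) (fun i => D i (σ i)) ?_
    intro i
    exact hasSum_interval hq0 hq1 hzm hzp (hL _) (hL _) (hx i.castSucc_lt_succ) _
  have h4 : D.det * qpochR q q M = vprod x := by
    rw [vprod_succ_det, qpoch_eq, mul_comm, ← Matrix.det_mul_row]
    congr 1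
    ext i j
    have h5 : (1 - q ^ ((j : ℕ) + 1)) ≠ 0 := by
      have : q ^ ((j : ℕ) + 1) < 1 := pow_lt_one₀ hq0.le hq1 (Nat.succ_ne_zero j)
      exact (sub_pos.2 this).ne'
    simp only [Matrix.of_apply, D]
    field_simp
  have h5 := (h3.mul_right (qpochR q q M)).div_const (vprod x)
  rw [h4, div_self hV.ne'] at h5
  exact h5

end vander

section combin

/-- key for the variational order -/
def vkey (t : ℝ) : ℝ ×ₗ ℝ := toLex (|t|, t)

lemma varLE_iff (a b : ℝ) : varLE a b ↔ vkey a ≤ vkey b := by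
  simp [varLE, vkey, Prod.Lex.toLex_le_toLex]

lemma vkey_inj : Function.Injective vkey := by
  intro a b h
  have := congrArg (fun p => (ofLex p).2) h
  simpa [vkey] using this

lemma abs_le_of_vkey {a b : ℝ} (h : vkey a ≤ vkey b) : |a| ≤ |b| := by
  rw [← varLE_iff] at h
  rcases h with h | h
  · exact h.le
  · exact h.1.le

lemma vkey_lt_of_abs {a b : ℝ} (h : |a| < |b|) : vkey a < vkey b := by
  have h1 : vkey a ≤ vkey b := (varLE_iff _ _).1 (Or.inl h)
  refine lt_of_le_of_ne h1 fun h2 => ?_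
  rw [vkey_inj h2] at h
  exact lt_irrefl _ h

lemma mem_interval {q zm zp a b t : ℝ} (h : t ∈ qInterval q zm zp a b) :
    t ∈ Lambda q zm zp ∧ a ≤ t ∧ t ≤ b ∧ (b < 0 → t < b) ∧ (0 < a → a < t) := by
  unfold qInterval at h
  split_ifs at h with h1 h2
  · obtain ⟨⟨h3, h4⟩, h5⟩ := h
    exact ⟨h5, h3, h4.le, fun _ => h4, fun h => absurd (h.trans_le (h3.trans h4.le)) h1.not_gt⟩
  · obtain ⟨⟨h3, h4⟩, h5⟩ := h
    exact ⟨h5, h3, h4, fun h => absurd h h1, fun h => absurd h h2.not_gt⟩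
  · obtain ⟨⟨h3, h4⟩, h5⟩ := h
    exact ⟨h5, h3.le, h4, fun h => absurd h h1, fun _ => h3⟩

lemma right_mem_interval {q zm zp a b : ℝ} (hb : b ∈ Lambda q zm zp) (h : 0 < b) (hab : a < b) :
    b ∈ qInterval q zm zp a b := by
  unfold qInterval
  rw [if_neg h.not_gt]
  split_ifs
  · exact ⟨⟨hab.le, le_rfl⟩, hb⟩
  · exact ⟨⟨hab, le_rfl⟩, hb⟩

lemma left_mem_interval {q zm zp a b : ℝ} (ha : a ∈ Lambda q zm zp) (h : a < 0) (hab : a < b) :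
    a ∈ qInterval q zm zp a b := by
  unfold qInterval
  rw [if_pos h]
  split_ifs
  · exact ⟨⟨le_rfl, hab⟩, ha⟩
  · exact ⟨⟨le_rfl, hab.le⟩, ha⟩

lemma interlace_strictMono {q zm zp : ℝ} (hq0 : 0 < q) (hzm : zm < 0) (hzp : 0 < zp) {M : ℕ}
    {x : Fin (M + 1) → ℝ} (hx : StrictMono x) (hL : ∀ i, x i ∈ Lambda q zm zp)
    {y : Fin M → ℝ} (hy : ∀ i, y i ∈ qInterval q zm zp (x i.castSucc) (x i.succ)) :
    StrictMono y := by
  intro l l' h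
  obtain ⟨_, _, h1, h2, _⟩ := mem_interval (hy l)
  obtain ⟨_, h3, _, _, h4⟩ := mem_interval (hy l')
  have h5 : x l.succ ≤ x l'.castSucc := hx.monotone (by
    rw [Fin.le_def]; simp; exact h)
  rcases lt_or_gt_of_ne (lam_ne_zero hq0 hzm hzp (hL l.succ)) with h6 | h6
  · linarith [h2 h6]
  · linarith [h4 (h6.trans_le h5)]

/-- Slots of the interlacing vector are matched with the variational series. -/
lemma exists_slots {q zm zp : ℝ} (hq0 : 0 < q) (hzm : zm < 0) (hzp : 0 < zp) {M : ℕ}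
    (X : Conf q zm zp (M + 1)) (v : Fin (M + 1) → ℝ) (hv : IsVarSeries q zm zp X v) :
    ∃ τ : Equiv.Perm (Fin M), ∀ j : Fin M,
      (X.1 (τ j).castSucc = v j.castSucc ∧ vkey (X.1 (τ j).succ) ≤ vkey (v j.castSucc)) ∨
      (X.1 (τ j).succ = v j.castSucc ∧ vkey (X.1 (τ j).castSucc) ≤ vkey (v j.castSucc)) := by
  obtain ⟨⟨x, hx, hL⟩, rfl⟩ : ∃ X', X = X' := ⟨X, rfl⟩
  obtain ⟨⟨σ, hσ⟩, hmono⟩ := hv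
  simp only at hσ ⊢
  let ψ : Fin M → Fin (M + 1) := fun l =>
    if vkey (x l.succ) ≤ vkey (x l.castSucc) then l.castSucc else l.succ
  have hψ : ∀ l, (ψ l = l.castSucc ∧ vkey (x l.succ) < vkey (x l.castSucc)) ∨
      (ψ l = l.succ ∧ vkey (x l.castSucc) < vkey (x l.succ)) := by
    intro l
    by_cases h : vkey (x l.succ) ≤ vkey (x l.castSucc)
    · left
      refine ⟨if_pos h, lt_of_le_of_ne h fun h' => ?_⟩
      exact l.castSucc_lt_succ.ne (hx.injective (vkey_inj h')).symm
    · right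
      exact ⟨if_neg h, not_le.1 h⟩
  have hlt : ∀ l l' : Fin M, l < l' → ψ l ≠ ψ l' := by
    intro l l' hll heq
    have hl : (l : ℕ) < l' := hll
    rcases hψ l with ⟨h1, h2⟩ | ⟨h1, h2⟩ <;> rcases hψ l' with ⟨h3, h4⟩ | ⟨h3, h4⟩ <;>
      rw [h1, h3] at heq <;> have hval := congrArg Fin.val heq <;> simp at hval
    · omega
    · omega
    · rw [heq] at h2
      have h5 : x l.castSucc < x l'.castSucc := hx (by rw [Fin.lt_def]; simpa using hl)
      have h6 : x l'.castSucc < x l'.succ := hx l'.castSucc_lt_succ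
      have h7 := abs_le_of_vkey h2.le
      have h8 := abs_le_of_vkey h4.le
      rcases lt_or_gt_of_ne (lam_ne_zero hq0 hzm hzp (hL l'.castSucc)) with h9 | h9
      · rw [abs_of_neg h9, abs_of_neg (h5.trans h9)] at h7
        linarith
      · rw [abs_of_pos h9, abs_of_pos (h9.trans h6)] at h8
        linarith
    · omega
  have hψinj : Function.Injective ψ := by
    intro l l' h
    rcases lt_trichotomy l l' with h1 | h1 | h1
    · exact absurd h (hlt _ _ h1)
    · exact h1
    · exact absurd h.symm (hlt _ _ h1)
  have hmin : ∀ p, vkey (x (σ (Fin.last M))) ≤ vkey (x p) := by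
    intro p
    rcases (Fin.le_last (σ.symm p)).lt_or_eq with h | h
    · have := (varLE_iff _ _).1 (hmono _ _ h)
      simpa [hσ] using this
    · rw [← h]; simp
  have hne : ∀ l, σ.symm (ψ l) ≠ Fin.last M := by
    intro l h
    have h1 : ψ l = σ (Fin.last M) := by rw [← h]; simp
    rcases hψ l with ⟨h2, h3⟩ | ⟨h2, h3⟩
    · have := hmin l.succ
      rw [← h1, h2] at this
      exact absurd h3 this.not_gt
    · have := hmin l.castSucc
      rw [← h1, h2] at this
      exact absurd h3 this.not_gt
  let e : Fin M → Fin M := fun l => (σ.symm (ψ l)).castPred (hne l)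
  have hecast : ∀ l, (e l).castSucc = σ.symm (ψ l) := fun l => Fin.castSucc_castPred _ _
  have heinj : Function.Injective e := by
    intro l l' h
    have := congrArg Fin.castSucc h
    rw [hecast, hecast] at this
    exact hψinj (σ.symm.injective this)
  let E : Equiv.Perm (Fin M) := Equiv.ofBijective e (Finite.injective_iff_bijective.1 heinj)
  refine ⟨E.symm, fun j => ?_⟩
  have h1 : ψ (E.symm j) = σ j.castSucc := by
    have h2 : e (E.symm j) = j := E.apply_symm_apply j
    have h3 := hecast (E.symm j)
    rw [h2] at h3
    rw [h3]; simp
  have h4 : v j.castSucc = x (ψ (E.symm j)) := by rw [h1, hσ]; rfl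
  rw [h4]
  rcases hψ (E.symm j) with ⟨h2, h3⟩ | ⟨h2, h3⟩
  · left; rw [h2]; exact ⟨rfl, h3.le⟩
  · right; rw [h2]; exact ⟨rfl, h3.le⟩

lemma sort_frozen {M k : ℕ} (z v : Fin M → ℝ) (hz : Function.Injective z)
    (hle : ∀ j, vkey (z j) ≤ vkey (v j)) (hv : ∀ i j : Fin M, i < j → vkey (v j) ≤ vkey (v i))
    (heq : ∀ j : Fin M, (j : ℕ) < k → z j = v j) :
    ∃ ρ : Equiv.Perm (Fin M), (∀ i j : Fin M, i < j → vkey (z (ρ j)) ≤ vkey (z (ρ i))) ∧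
      ∀ i : Fin M, (i : ℕ) < k → z (ρ i) = v i := by
  let f : Fin M → (ℝ ×ₗ ℝ)ᵒᵈ := fun j => OrderDual.toDual (vkey (z j))
  have hs := Tuple.monotone_sort f
  set ρ := Tuple.sort f with hρ
  have hanti : ∀ i j : Fin M, i ≤ j → vkey (z (ρ j)) ≤ vkey (z (ρ i)) := fun i j hij => hs hij
  refine ⟨ρ, fun i j hij => hanti i j hij.le, ?_⟩
  have key : ∀ n : ℕ, ∀ i : Fin M, (i : ℕ) = n → n < k → ρ i = i := by
    intro n
    induction n using Nat.strong_induction_on with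
    | _ n ih =>
      intro i hi hn
      have hge : i ≤ ρ i := by
        by_contra h
        push Not at h
        have h1 : ((ρ i : Fin M) : ℕ) < i := h
        have h2 := ih (ρ i) (by omega) (ρ i) rfl (by omega)
        have h3 := ρ.injective h2
        rw [h3] at h1
        exact lt_irrefl _ h1
      have hge2 : i ≤ ρ.symm i := by
        by_contra h
        push Not at h
        have h1 : ((ρ.symm i : Fin M) : ℕ) < i := h
        have h2 := ih (ρ.symm i) (by omega) (ρ.symm i) rfl (by omega)
        rw [Equiv.apply_symm_apply] at h2
        rw [← h2] at h1
        exact lt_irrefl _ h1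
      have h1 : vkey (z (ρ i)) ≤ vkey (z i) := by
        rw [heq i (by omega)]
        rcases hge.lt_or_eq with h | h
        · exact (hle _).trans (hv _ _ h)
        · rw [← h]; exact hle i
      have h2 : vkey (z i) ≤ vkey (z (ρ i)) := by
        have := hanti _ _ hge2
        rwa [Equiv.apply_symm_apply] at this
      exact hz (vkey_inj (le_antisymm h1 h2))
  intro i hi
  rw [key i i rfl hi, heq i hi]

lemma vprod_ratio {M : ℕ} {y : Fin M → ℝ} {s : Fin M} {a : ℝ} (hy : StrictMono y)
    (hy' : StrictMono (Function.update y s a)) (β : Fin M → ℝ) (hβ : ∀ l, 0 < β l)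
    (hs : 1 ≤ β s) (h : ∀ l, l ≠ s → |y l - y s| ≤ β l * |y l - a|) :
    vprod y ≤ (∏ l, β l) * vprod (Function.update y s a) := by
  let b : Fin M × Fin M → ℝ := fun p =>
    (if p.1 = s then β p.2 else 1) * (if p.2 = s then β p.1 else 1)
  have hb : ∀ p, 0 < b p := by
    intro p
    refine mul_pos ?_ ?_ <;> split_ifs <;> first | exact hβ _ | exact one_pos
  have h1 : vprod y ≤ (∏ p ∈ Finset.univ.filter (fun p : Fin M × Fin M => p.1 < p.2), b p) *
      vprod (Function.update y s a) := by
    unfold vprod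
    rw [← Finset.prod_mul_distrib]
    refine Finset.prod_le_prod ?_ ?_
    · intro p hp
      have := hy (Finset.mem_filter.1 hp).2
      linarith
    · rintro ⟨i, j⟩ hp
      have hij : i < j := (Finset.mem_filter.1 hp).2
      have h2 := hy hij
      have h3 := hy' hij
      simp only [b]
      by_cases hi : i = s
      · have hj : j ≠ s := fun h => by rw [hi, h] at hij; exact lt_irrefl _ hij
        have h4 := h j hj
        subst hi
        rw [if_pos rfl, if_neg hj, Function.update_self, Function.update_of_ne hj, mul_one]
        rw [Function.update_self, Function.update_of_ne hj] at h3
        rwa [abs_of_pos (by linarith), abs_of_pos (by linarith)] at h4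
      · by_cases hj : j = s
        · have h4 := h i hi
          subst hj
          rw [if_neg hi, if_pos rfl, Function.update_self, Function.update_of_ne hi, one_mul]
          rw [Function.update_self, Function.update_of_ne hi] at h3
          rw [abs_of_neg (by linarith), abs_of_neg (by linarith)] at h4
          linarith
        · rw [if_neg hi, if_neg hj, Function.update_of_ne hi, Function.update_of_ne hj]
          linarith
  refine h1.trans (mul_le_mul_of_nonneg_right ?_ (vprod_pos hy').le)
  have e1 : ∏ p ∈ Finset.univ.filter (fun p : Fin M × Fin M => p.1 < p.2),
      (if p.1 = s then β p.2 else 1) = ∏ l, if s < l then β l else 1 := by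
    rw [Finset.prod_filter, ← Finset.univ_product_univ, Finset.prod_product]
    rw [Finset.prod_eq_single s]
    · simp
    · intro i _ hi; simp [hi]
    · simp
  have e2 : ∏ p ∈ Finset.univ.filter (fun p : Fin M × Fin M => p.1 < p.2),
      (if p.2 = s then β p.1 else 1) = ∏ l, if l < s then β l else 1 := by
    rw [Finset.prod_filter, ← Finset.univ_product_univ, Finset.prod_product_right]
    rw [Finset.prod_eq_single s]
    · simp
    · intro i _ hi; simp [hi]
    · simp
  simp only [b]
  rw [Finset.prod_mul_distrib, e1, e2, ← Finset.prod_mul_distrib]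
  refine Finset.prod_le_prod ?_ ?_
  · intro l _
    refine mul_nonneg ?_ ?_ <;> split_ifs <;> first | exact (hβ _).le | exact zero_le_one
  · intro l _
    rcases lt_trichotomy l s with h | h | h
    · simp [h, h.not_gt]
    · subst h; simpa using hs
    · simp [h, h.not_gt]

end combin

section bound

lemma slot_le {q zm zp a b c t : ℝ} (hq0 : 0 < q) (hzm : zm < 0) (hzp : 0 < zp)
    (ht : t ∈ qInterval q zm zp a b) (ha : vkey a ≤ vkey c) (hb : vkey b ≤ vkey c) :
    vkey t ≤ vkey c := by
  obtain ⟨hL, h1, h2, _, _⟩ := mem_interval ht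
  rcases lt_or_gt_of_ne (lam_ne_zero hq0 hzm hzp hL) with h | h
  · rcases h1.lt_or_eq with h3 | h3
    · refine (vkey_lt_of_abs ?_).le.trans ha
      rw [abs_of_neg h, abs_of_neg (h3.trans h)]
      linarith
    · rwa [← h3]
  · rcases h2.lt_or_eq with h3 | h3
    · refine (vkey_lt_of_abs ?_).le.trans hb
      rw [abs_of_pos h, abs_of_pos (h.trans h3)]
      linarith
    · rwa [h3]

lemma ratioA {q a ys yl : ℝ} (hq0 : 0 < q) (hq1 : q < 1) (ha : 0 < a) (h2 : ys ≤ q * a)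
    (h3 : yl < ys) (h4 : -a ≤ yl) : |yl - ys| ≤ (1 + q) / 2 * |yl - a| := by
  have h5 : yl < a := by nlinarith
  rw [abs_of_neg (by linarith), abs_of_neg (by linarith)]
  nlinarith [mul_nonneg (sub_nonneg.2 hq1.le) (by linarith : 0 ≤ yl + a)]

lemma ratioB {q a ys yl : ℝ} (hq0 : 0 < q) (hq1 : q < 1) (ha : 0 < a) (h2 : ys ≤ q * a)
    (h3 : yl < ys) : |yl - ys| ≤ (1 + q) / (1 - q) * |yl - a| := by
  have h5 : ys < a := by nlinarith
  rw [abs_of_neg (by linarith), abs_of_neg (by linarith)]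
  have h6 : 1 ≤ (1 + q) / (1 - q) := by
    rw [le_div_iff₀ (by linarith)]; linarith
  nlinarith [mul_nonneg (sub_nonneg.2 h6) (by linarith : 0 ≤ a - yl)]

lemma ratioC {q a ys yl : ℝ} (hq0 : 0 < q) (hq1 : q < 1) (ha : 0 < a) (h1 : -a ≤ ys)
    (h2 : ys ≤ q * a) (h3 : a ≤ q * yl) : |yl - ys| ≤ (1 + q) / (1 - q) * |yl - a| := by
  have h5 : ys < a := by nlinarith
  have h0 : 0 < yl := by
    by_contra h
    nlinarith
  have h6 : a < yl := by nlinarith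
  rw [abs_of_pos (by linarith), abs_of_pos (by linarith), div_mul_eq_mul_div,
    le_div_iff₀ (by linarith)]
  nlinarith [mul_nonneg (sub_nonneg.2 hq1.le) (by linarith : 0 ≤ ys + a)]

lemma wt_nonneg {q zm zp : ℝ} (hq0 : 0 < q) (hq1 : q < 1) (hzm : zm < 0) (hzp : 0 < zp) {M : ℕ}
    {x : Fin (M + 1) → ℝ} (hx : StrictMono x) (hL : ∀ i, x i ∈ Lambda q zm zp)
    (y : Fin M → ℝ) : 0 ≤ wt q zm zp x y := by
  have hV := vprod_pos hx
  have hQ := qpoch_pos hq0 hq1 M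
  by_cases hy : ∀ i, y i ∈ qInterval q zm zp (x i.castSucc) (x i.succ)
  · have := vprod_pos (interlace_strictMono hq0 hzm hzp hx hL hy)
    unfold wt
    have h1 : 0 ≤ ∏ i, (if y i ∈ qInterval q zm zp (x i.castSucc) (x i.succ) then |y i| else 0) := by
      refine Finset.prod_nonneg fun i _ => ?_
      split_ifs
      · exact abs_nonneg _
      · exact le_rfl
    positivity
  · push Not at hy
    obtain ⟨i, hi⟩ := hy
    have : (∏ i, (if y i ∈ qInterval q zm zp (x i.castSucc) (x i.succ) then |y i| else 0)) = 0 :=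
      Finset.prod_eq_zero (Finset.mem_univ i) (if_neg hi)
    unfold wt
    rw [this]; simp

lemma wt_ne_zero {q zm zp : ℝ} {M : ℕ}
    {x : Fin (M + 1) → ℝ} {y : Fin M → ℝ} (h : wt q zm zp x y ≠ 0) :
    ∀ i, y i ∈ qInterval q zm zp (x i.castSucc) (x i.succ) := by
  intro i
  by_contra hi
  have : (∏ i, (if y i ∈ qInterval q zm zp (x i.castSucc) (x i.succ) then |y i| else 0)) = 0 :=
    Finset.prod_eq_zero (Finset.mem_univ i) (if_neg hi)
  apply h
  unfold wt
  rw [this]; simp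

lemma wt_eq {q zm zp : ℝ} {M : ℕ}
    {x : Fin (M + 1) → ℝ} {y : Fin M → ℝ}
    (h : ∀ i, y i ∈ qInterval q zm zp (x i.castSucc) (x i.succ)) :
    wt q zm zp x y = (∏ i, |y i|) * vprod y * qpochR q q M / vprod x := by
  unfold wt
  simp [h]

/-- majorant for the moved coordinate -/
def gmaj (q a b t : ℝ) : ℝ :=
  (if t ∈ qray q a then |t| / |a| else 0) + (if t ∈ qray q b then |t| / |b| else 0)

lemma hasSum_ray_abs {q a : ℝ} (hq0 : 0 < q) (hq1 : q < 1) (ha : a ≠ 0) :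
    HasSum (fun t : ℝ => if t ∈ qray q a then |t| / |a| else 0) (1 / (1 - q)) := by
  have h := (hasSum_ray hq0 hq1 ha 0).div_const a
  have e : (a ^ (0 + 1) / (1 - q ^ (0 + 1))) / a = 1 / (1 - q) := by
    have : 1 - q ≠ 0 := (sub_pos.2 hq1).ne'
    simp only [zero_add, pow_one]
    field_simp
  rw [e] at h
  refine (congrArg (fun F => HasSum F _) (funext fun t => ?_)).mpr h
  split_ifs with ht
  · have h1 := ray_sign hq0 ha ht
    rw [zero_add, pow_one, ← abs_div, abs_of_pos]
    have : t / a = (t * a) / (a * a) := by field_simp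
    rw [this]
    exact div_pos h1 (mul_self_pos.2 ha)
  · simp

lemma hasSum_gmaj {q a b : ℝ} (hq0 : 0 < q) (hq1 : q < 1) (ha : a ≠ 0) (hb : b ≠ 0) :
    HasSum (gmaj q a b) (2 / (1 - q)) := by
  have := (hasSum_ray_abs hq0 hq1 ha).add (hasSum_ray_abs hq0 hq1 hb)
  have e : 1 / (1 - q) + 1 / (1 - q) = 2 / (1 - q) := by ring
  rw [e] at this
  exact this

lemma gmaj_nonneg (q a b t : ℝ) : 0 ≤ gmaj q a b t := by
  unfold gmaj
  split_ifs <;> positivity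

lemma le_gmaj {q zm zp : ℝ} (hq0 : 0 < q) (hq1 : q < 1) (hzm : zm < 0) (hzp : 0 < zp)
    {a b c t : ℝ} (ha : a ∈ Lambda q zm zp) (hb : b ∈ Lambda q zm zp)
    (ht : t ∈ qInterval q zm zp a b) (hac : |a| ≤ |c|) (hbc : |b| ≤ |c|) :
    |t| / |c| ≤ gmaj q a b t := by
  obtain ⟨hL, h1, h2, _, _⟩ := mem_interval ht
  have hapos : 0 < |a| := abs_pos.2 (lam_ne_zero hq0 hzm hzp ha)
  have hbpos : 0 < |b| := abs_pos.2 (lam_ne_zero hq0 hzm hzp hb)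
  unfold gmaj
  rcases lt_or_gt_of_ne (lam_ne_zero hq0 hzm hzp hL) with h | h
  · have : t ∈ qray q a := (ray_neg_iff hq0 hq1 hzm hzp ha (h1.trans_lt h)).2 ⟨hL, h, h1⟩
    rw [if_pos this]
    have h3 : |t| / |c| ≤ |t| / |a| := by gcongr
    have h4 : 0 ≤ if t ∈ qray q b then |t| / |b| else 0 := by split_ifs <;> positivity
    linarith
  · have : t ∈ qray q b := (ray_pos_iff hq0 hq1 hzm hzp hb (h.trans_le h2)).2 ⟨hL, h, h2⟩
    rw [if_pos this]
    have h3 : |t| / |c| ≤ |t| / |b| := by gcongr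
    have h4 : 0 ≤ if t ∈ qray q a then |t| / |a| else 0 := by split_ifs <;> positivity
    linarith

lemma prod_beta {M k : ℕ} (hk : k ≤ M) (τ : Equiv.Perm (Fin M)) (C r : ℝ) :
    ∏ l, (if ((τ.symm l : Fin M) : ℕ) < k then C else r) = C ^ k * r ^ (M - k) := by
  rw [Equiv.prod_comp τ.symm (fun l : Fin M => if (l : ℕ) < k then C else r)]
  rw [Finset.prod_ite, Finset.prod_const, Finset.prod_const]
  have h1 : (Finset.univ.filter (fun i : Fin M => (i : ℕ) < k)).card = k := by
    rw [Fin.card_filter_val_lt]; exact min_eq_right hk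
  have h2 := Finset.card_filter_add_card_filter_not (s := (Finset.univ : Finset (Fin M)))
    (fun i : Fin M => (i : ℕ) < k)
  rw [h1, Finset.card_univ, Fintype.card_fin] at h2
  rw [h1]
  congr 2
  omega

lemma wt_bad {q zm zp : ℝ} (hq0 : 0 < q) (hq1 : q < 1) (hzm : zm < 0) (hzp : 0 < zp) {M k : ℕ}
    (hk : k ≤ M) {x : Fin (M + 1) → ℝ} (hx : StrictMono x) (hL : ∀ i, x i ∈ Lambda q zm zp)
    (v : Fin (M + 1) → ℝ) (hv : ∀ i j : Fin (M + 1), i < j → vkey (v j) ≤ vkey (v i))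
    (τ : Equiv.Perm (Fin M))
    (hτ : ∀ j : Fin M,
      (x (τ j).castSucc = v j.castSucc ∧ vkey (x (τ j).succ) ≤ vkey (v j.castSucc)) ∨
      (x (τ j).succ = v j.castSucc ∧ vkey (x (τ j).castSucc) ≤ vkey (v j.castSucc)))
    (j : Fin M) (hj : (j : ℕ) < k) (y : Fin M → ℝ) (hne : y (τ j) ≠ v j.castSucc) :
    wt q zm zp x y ≤ (((1 + q) / (1 - q)) ^ k * ((1 + q) / 2) ^ (M - k)) *
      (gmaj q (x (τ j).castSucc) (x (τ j).succ) (y (τ j)) *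
        wt q zm zp x (Function.update y (τ j) (v j.castSucc))) := by
  have hC1 : 1 ≤ (1 + q) / (1 - q) := by
    rw [le_div_iff₀ (by linarith)]; linarith
  have hC0 : 0 < (1 + q) / (1 - q) := by linarith
  have hr0 : 0 < (1 + q) / 2 := by linarith
  by_cases h0 : wt q zm zp x y = 0
  · rw [h0]
    have := wt_nonneg hq0 hq1 hzm hzp hx hL (Function.update y (τ j) (v j.castSucc))
    have := gmaj_nonneg q (x (τ j).castSucc) (x (τ j).succ) (y (τ j))
    positivity
  have hy := wt_ne_zero h0
  have hymono := interlace_strictMono hq0 hzm hzp hx hL hy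
  have hle : ∀ j', vkey (y (τ j')) ≤ vkey (v (Fin.castSucc j')) := by
    intro j'
    rcases hτ j' with ⟨h1, h2⟩ | ⟨h1, h2⟩
    · exact slot_le hq0 hzm hzp (hy _) (by rw [h1]) h2
    · exact slot_le hq0 hzm hzp (hy _) h2 (by rw [h1])
  have hτj := hτ j
  set a := v j.castSucc with ha_def
  set s := τ j with hs_def
  have haL : a ∈ Lambda q zm zp := by
    rcases hτj with ⟨h1, _⟩ | ⟨h1, _⟩ <;> rw [← h1] <;> exact hL _
  have ha0 := lam_ne_zero hq0 hzm hzp haL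
  have hsx := hx s.castSucc_lt_succ
  have hys := abs_le_of_vkey (hle j)
  rw [← hs_def, ← ha_def] at hys
  have hapos : 0 < a → x s.succ = a := by
    intro h
    rcases hτj with ⟨h1, h2⟩ | ⟨h1, h2⟩
    · exfalso
      have := abs_le_of_vkey h2
      rw [h1] at hsx
      rw [abs_of_pos h, abs_of_pos (h.trans hsx)] at this
      linarith
    · exact h1
  have haneg : a < 0 → x s.castSucc = a := by
    intro h
    rcases hτj with ⟨h1, h2⟩ | ⟨h1, h2⟩
    · exact h1
    · exfalso
      have := abs_le_of_vkey h2
      rw [h1] at hsx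
      rw [abs_of_neg h, abs_of_neg (hsx.trans h)] at this
      linarith
  have hxa : |x s.castSucc| ≤ |a| ∧ |x s.succ| ≤ |a| := by
    rcases hτj with ⟨h1, h2⟩ | ⟨h1, h2⟩
    · exact ⟨by rw [h1], abs_le_of_vkey h2⟩
    · exact ⟨abs_le_of_vkey h2, by rw [h1]⟩
  have haI : a ∈ qInterval q zm zp (x s.castSucc) (x s.succ) := by
    rcases lt_or_gt_of_ne ha0 with h | h
    · have := left_mem_interval (b := x s.succ) haL h (by rw [← haneg h]; exact hsx)
      rwa [haneg h]
    · have := right_mem_interval (a := x s.castSucc) haL h (by rw [← hapos h]; exact hsx)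
      rwa [hapos h]
  have hy' : ∀ i, Function.update y s a i ∈ qInterval q zm zp (x i.castSucc) (x i.succ) := by
    intro i
    by_cases h : i = s
    · subst h; rwa [Function.update_self]
    · rw [Function.update_of_ne h]; exact hy i
  have hymono' := interlace_strictMono hq0 hzm hzp hx hL hy'
  have hsmall : ∀ l, ¬ ((τ.symm l : Fin M) : ℕ) < k → |y l| ≤ |a| := by
    intro l hl
    have h1 := hle (τ.symm l)
    rw [Equiv.apply_symm_apply] at h1
    refine abs_le_of_vkey (h1.trans (hv _ _ ?_))
    rw [Fin.lt_def]
    simp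
    omega
  have hratio : ∀ l, l ≠ s → |y l - y s| ≤
      (if ((τ.symm l : Fin M) : ℕ) < k then (1 + q) / (1 - q) else (1 + q) / 2) * |y l - a| := by
    intro l hl
    obtain ⟨hsL, hs1, hs2, _, _⟩ := mem_interval (hy s)
    obtain ⟨hlL, hl1, hl2, hl3, hl4⟩ := mem_interval (hy l)
    rcases lt_or_gt_of_ne ha0 with h | h
    · have hxs := haneg h
      rw [hxs] at hs1
      have hlt : a < y s := lt_of_le_of_ne hs1 (Ne.symm hne)
      rw [abs_of_neg h] at hys
      have hys2 := abs_le.1 hys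
      have hqa : -(y s) ≤ q * (-a) := by
        rcases lt_or_ge (y s) 0 with h1 | h1
        · have := lam_gap hq0 hq1 hzm hzp hsL haL (mul_pos_of_neg_of_neg h1 h)
            (by rw [abs_of_neg h1, abs_of_neg h]; linarith)
          rwa [abs_of_neg h1, abs_of_neg h] at this
        · nlinarith
      have e1 : |y l - y s| = |-y l - -y s| := by rw [← abs_neg]; congr 1; ring
      have e2 : |y l - a| = |-y l - -a| := by rw [← abs_neg]; congr 1; ring
      rw [e1, e2]
      rcases lt_or_gt_of_ne hl with h1 | h1
      · have h2 : x l.succ ≤ x s.castSucc := hx.monotone (by rw [Fin.le_def]; simp; exact h1)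
        rw [hxs] at h2
        have h3 := hl3 (h2.trans_lt h)
        have h4 : y l < a := h3.trans_le h2
        have h5 := lam_gap hq0 hq1 hzm hzp haL hlL (mul_pos_of_neg_of_neg h (h4.trans h))
            (by rw [abs_of_neg h, abs_of_neg (h4.trans h)]; linarith)
        rw [abs_of_neg h, abs_of_neg (h4.trans h)] at h5
        split_ifs with hlk
        · exact ratioC hq0 hq1 (by linarith) (by linarith) hqa h5
        · exfalso
          have := hsmall l hlk
          rw [abs_of_neg h, abs_of_neg (h4.trans h)] at this
          linarith
      · have h2 := hymono h1
        split_ifs with hlk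
        · exact ratioB hq0 hq1 (by linarith) hqa (by linarith)
        · have h3 := hsmall l hlk
          rw [abs_of_neg h] at h3
          exact ratioA hq0 hq1 (by linarith) hqa (by linarith) (by linarith [(abs_le.1 h3).2])
    · have hxs := hapos h
      rw [hxs] at hs2
      have hlt : y s < a := lt_of_le_of_ne hs2 hne
      rw [abs_of_pos h] at hys
      have hys2 := abs_le.1 hys
      have hqa : y s ≤ q * a := by
        rcases lt_or_ge 0 (y s) with h1 | h1
        · have := lam_gap hq0 hq1 hzm hzp hsL haL (mul_pos h1 h)
            (by rw [abs_of_pos h1, abs_of_pos h]; linarith)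
          rwa [abs_of_pos h1, abs_of_pos h] at this
        · nlinarith
      rcases lt_or_gt_of_ne hl with h1 | h1
      · have h2 := hymono h1
        split_ifs with hlk
        · exact ratioB hq0 hq1 h hqa h2
        · have h3 := hsmall l hlk
          rw [abs_of_pos h] at h3
          exact ratioA hq0 hq1 h hqa h2 (abs_le.1 h3).1
      · have h2 : x s.succ ≤ x l.castSucc := hx.monotone (by rw [Fin.le_def]; simp; exact h1)
        rw [hxs] at h2
        have h3 := hl4 (h.trans_le h2)
        have h4 : a < y l := h2.trans_lt h3
        have h5 := lam_gap hq0 hq1 hzm hzp haL hlL (mul_pos h (h.trans h4))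
            (by rw [abs_of_pos h, abs_of_pos (h.trans h4)]; linarith)
        rw [abs_of_pos h, abs_of_pos (h.trans h4)] at h5
        split_ifs with hlk
        · exact ratioC hq0 hq1 h hys2.1 hqa h5
        · exfalso
          have := hsmall l hlk
          rw [abs_of_pos h, abs_of_pos (h.trans h4)] at this
          linarith
  have hV := vprod_ratio hymono hymono'
    (fun l => if ((τ.symm l : Fin M) : ℕ) < k then (1 + q) / (1 - q) else (1 + q) / 2)
    (fun l => by split_ifs <;> assumption)
    (by simp only [hs_def, Equiv.symm_apply_apply, if_pos hj]; exact hC1) hratio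
  rw [prod_beta hk] at hV
  have hprod : ∏ i, |y i| = |y s| / |a| * ∏ i, |Function.update y s a i| := by
    rw [← Finset.mul_prod_erase _ _ (Finset.mem_univ s),
      ← Finset.mul_prod_erase Finset.univ (fun i => |Function.update y s a i|) (Finset.mem_univ s)]
    have : ∏ i ∈ Finset.univ.erase s, |Function.update y s a i| =
        ∏ i ∈ Finset.univ.erase s, |y i| :=
      Finset.prod_congr rfl fun i hi => by rw [Function.update_of_ne (Finset.ne_of_mem_erase hi)]
    rw [this, Function.update_self]
    have : |a| ≠ 0 := abs_ne_zero.2 ha0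
    field_simp
  have hg := le_gmaj hq0 hq1 hzm hzp (hL s.castSucc) (hL s.succ) (hy s) hxa.1 hxa.2
  have hVX := vprod_pos hx
  have hQ := qpoch_pos hq0 hq1 M
  have hVY := vprod_pos hymono'
  rw [wt_eq hy, wt_eq hy', hprod]
  set P := ∏ i, |Function.update y s a i|
  have hP : 0 ≤ P := Finset.prod_nonneg fun i _ => abs_nonneg _
  set K := ((1 + q) / (1 - q)) ^ k * ((1 + q) / 2) ^ (M - k)
  have hK : 0 ≤ K := by positivity
  calc |y s| / |a| * P * vprod y * qpochR q q M / vprod x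
      ≤ gmaj q (x s.castSucc) (x s.succ) (y s) * P * (K * vprod (Function.update y s a)) *
        qpochR q q M / vprod x := by
        have := (vprod_pos hymono).le
        have := gmaj_nonneg q (x s.castSucc) (x s.succ) (y s)
        gcongr
    _ = _ := by ring

end bound

section final

lemma bad_sum {q zm zp : ℝ} (hq0 : 0 < q) (hq1 : q < 1) (hzm : zm < 0) (hzp : 0 < zp) {M k : ℕ}
    (hk : k ≤ M) {x : Fin (M + 1) → ℝ} (hx : StrictMono x) (hL : ∀ i, x i ∈ Lambda q zm zp)
    (v : Fin (M + 1) → ℝ) (hv : ∀ i j : Fin (M + 1), i < j → vkey (v j) ≤ vkey (v i))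
    (τ : Equiv.Perm (Fin M))
    (hτ : ∀ j : Fin M,
      (x (τ j).castSucc = v j.castSucc ∧ vkey (x (τ j).succ) ≤ vkey (v j.castSucc)) ∨
      (x (τ j).succ = v j.castSucc ∧ vkey (x (τ j).castSucc) ≤ vkey (v j.castSucc)))
    (j : Fin M) (hj : (j : ℕ) < k) :
    ∑' y : Fin M → ℝ, (if y (τ j) ≠ v j.castSucc then wt q zm zp x y else 0) ≤
      (((1 + q) / (1 - q)) ^ k * ((1 + q) / 2) ^ (M - k)) * (2 / (1 - q)) := by
  have hW := hasSum_wt hq0 hq1 hzm hzp x hx hL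
  have hg := hasSum_gmaj (a := x (τ j).castSucc) (b := x (τ j).succ) hq0 hq1
    (lam_ne_zero hq0 hzm hzp (hL _)) (lam_ne_zero hq0 hzm hzp (hL _))
  set s := τ j
  set a := v j.castSucc
  set K := ((1 + q) / (1 - q)) ^ k * ((1 + q) / 2) ^ (M - k)
  have hq2 : 0 < 1 - q := by linarith
  have hK : 0 ≤ K := by positivity
  have hWn := wt_nonneg hq0 hq1 hzm hzp hx hL
  have hgn := gmaj_nonneg q (x s.castSucc) (x s.succ)
  let F : ℝ × (Fin M → ℝ) → ℝ := fun p => gmaj q (x s.castSucc) (x s.succ) p.1 * wt q zm zp x p.2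
  have hF : HasSum F (2 / (1 - q) * 1) :=
    hg.mul hW (summable_mul_of_summable_norm hg.summable.norm hW.summable.norm)
  have hFn : ∀ p, 0 ≤ F p := fun p => mul_nonneg (hgn _) (hWn _)
  let ι : (Fin M → ℝ) → ℝ × (Fin M → ℝ) := fun y => (y s, Function.update y s a)
  have hι : Function.Injective ι := by
    intro y y' h
    have h1 : y s = y' s := congrArg Prod.fst h
    have h2 : Function.update y s a = Function.update y' s a := congrArg Prod.snd h
    funext i
    by_cases hi : i = s
    · rw [hi, h1]
    · have := congrFun h2 i
      rwa [Function.update_of_ne hi, Function.update_of_ne hi] at this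
  have h1 : tsum (F ∘ ι) ≤ tsum F := tsum_comp_le_tsum_of_inj hF.summable hFn hι
  have hsF : Summable (F ∘ ι) := hF.summable.comp_injective hι
  have hpt : ∀ y : Fin M → ℝ, (if y s ≠ a then wt q zm zp x y else 0) ≤ K * (F ∘ ι) y := by
    intro y
    split_ifs with h
    · exact wt_bad hq0 hq1 hzm hzp hk hx hL v hv τ hτ j hj y h
    · exact mul_nonneg hK (hFn _)
  have hs1 : Summable (fun y : Fin M → ℝ => if y s ≠ a then wt q zm zp x y else 0) := by
    refine Summable.of_nonneg_of_le ?_ hpt (hsF.mul_left K)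
    intro y
    split_ifs
    · exact hWn y
    · exact le_rfl
  have h2 := hs1.tsum_le_tsum hpt (hsF.mul_left K)
  rw [tsum_mul_left] at h2
  refine h2.trans ?_
  rw [hF.tsum_eq, mul_one] at h1
  exact mul_le_mul_of_nonneg_left h1 hK

lemma main_bound {q zm zp : ℝ} (hq0 : 0 < q) (hq1 : q < 1) (hzm : zm < 0) (hzp : 0 < zp) {M k : ℕ}
    (hk : k ≤ M) (X : Conf q zm zp (M + 1)) (v : Fin (M + 1) → ℝ) (hvX : IsVarSeries q zm zp X v) :
    1 - k * ((((1 + q) / (1 - q)) ^ k * ((1 + q) / 2) ^ (M - k)) * (2 / (1 - q))) ≤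
      ∑' Y : {Y : Conf q zm zp M // ∃ vY : Fin M → ℝ,
              IsVarSeries q zm zp Y vY ∧
              ∀ i : Fin M, (i : ℕ) < k → vY i = v i.castSucc},
            qlink q zm zp M X Y.1 := by
  obtain ⟨τ, hτ⟩ := exists_slots hq0 hzm hzp X v hvX
  have hv : ∀ i j : Fin (M + 1), i < j → vkey (v j) ≤ vkey (v i) :=
    fun i j hij => (varLE_iff _ _).1 (hvX.2 i j hij)
  set x := X.1 with hxdef
  have hx : StrictMono x := X.2.1
  have hL : ∀ i, x i ∈ Lambda q zm zp := X.2.2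
  have hW := hasSum_wt hq0 hq1 hzm hzp x hx hL
  have hWn := wt_nonneg hq0 hq1 hzm hzp hx hL
  let G : Type := {Y : Conf q zm zp M // ∃ vY : Fin M → ℝ,
              IsVarSeries q zm zp Y vY ∧
              ∀ i : Fin M, (i : ℕ) < k → vY i = v i.castSucc}
  let ι : G → (Fin M → ℝ) := fun Y => Y.1.1
  have hι : Function.Injective ι := fun Y Y' h => Subtype.ext (Subtype.ext h)
  have hq : ∀ Y : G, qlink q zm zp M X Y.1 = wt q zm zp x (ι Y) := by
    intro Y
    unfold qlink
    by_cases h : Interlaces q zm zp Y.1 X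
    · rw [if_pos h, wt_eq h]
      ring
    · rw [if_neg h]
      by_contra h'
      exact h (wt_ne_zero (Ne.symm h'))
  let gd : (Fin M → ℝ) → ℝ := fun y => if y ∈ Set.range ι then wt q zm zp x y else 0
  have hgood : ∑' Y : G, qlink q zm zp M X Y.1 = ∑' y, gd y := by
    rw [← hι.tsum_eq]
    · refine tsum_congr fun Y => ?_
      rw [hq]
      simp [gd]
    · intro y hy
      by_contra h
      exact hy (if_neg h)
  change _ ≤ ∑' Y : G, qlink q zm zp M X Y.1
  rw [hgood]
  let S : Finset (Fin M) := Finset.univ.filter (fun j : Fin M => (j : ℕ) < k)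
  let bd : Fin M → (Fin M → ℝ) → ℝ := fun j y =>
    if y (τ j) ≠ v j.castSucc then wt q zm zp x y else 0
  have hbdn : ∀ j y, 0 ≤ bd j y := by
    intro j y; simp only [bd]; split_ifs
    · exact hWn y
    · exact le_rfl
  have hgdn : ∀ y, 0 ≤ gd y := by
    intro y; simp only [gd]; split_ifs
    · exact hWn y
    · exact le_rfl
  have hbds : ∀ j, Summable (bd j) := fun j =>
    Summable.of_nonneg_of_le (hbdn j) (fun y => by
      simp only [bd]; split_ifs
      · exact le_rfl
      · exact hWn y) hW.summable
  have hgds : Summable gd :=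
    Summable.of_nonneg_of_le hgdn (fun y => by
      simp only [gd]; split_ifs
      · exact le_rfl
      · exact hWn y) hW.summable
  have hpt : ∀ y, wt q zm zp x y ≤ gd y + ∑ j ∈ S, bd j y := by
    intro y
    have hsn : 0 ≤ ∑ j ∈ S, bd j y := Finset.sum_nonneg fun j _ => hbdn j y
    by_cases h0 : wt q zm zp x y = 0
    · rw [h0]; linarith [hgdn y]
    have hy := wt_ne_zero h0
    by_cases hall : ∀ j ∈ S, y (τ j) = v j.castSucc
    · have hmem : y ∈ Set.range ι := by
        have hymono := interlace_strictMono hq0 hzm hzp hx hL hy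
        have hle : ∀ j', vkey (y (τ j')) ≤ vkey (v (Fin.castSucc j')) := by
          intro j'
          rcases hτ j' with ⟨h1, h2⟩ | ⟨h1, h2⟩
          · exact slot_le hq0 hzm hzp (hy _) (by rw [h1]) h2
          · exact slot_le hq0 hzm hzp (hy _) h2 (by rw [h1])
        obtain ⟨ρ, hρ1, hρ2⟩ := sort_frozen (k := k) (fun j => y (τ j))
          (fun j : Fin M => v j.castSucc)
          (hymono.injective.comp τ.injective) hle
          (fun i j hij => hv _ _ (by rw [Fin.lt_def]; simpa using hij))
          (fun j hj => hall j (Finset.mem_filter.2 ⟨Finset.mem_univ _, hj⟩))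
        refine ⟨⟨⟨y, hymono, fun i => (mem_interval (hy i)).1⟩, fun i => y (τ (ρ i)), ⟨⟨ρ.trans τ, rfl⟩,
          fun i j hij => (varLE_iff _ _).2 (hρ1 i j hij)⟩, hρ2⟩, rfl⟩
      have : gd y = wt q zm zp x y := if_pos hmem
      linarith
    · push Not at hall
      obtain ⟨j, hj, hne⟩ := hall
      have h1 : bd j y = wt q zm zp x y := if_pos hne
      have h2 : bd j y ≤ ∑ j ∈ S, bd j y :=
        Finset.single_le_sum (f := fun j => bd j y) (fun j _ => hbdn j y) hj
      linarith [hgdn y]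
  have hsumS : Summable (fun y => ∑ j ∈ S, bd j y) := summable_sum fun j _ => hbds j
  have h1 := hW.summable.tsum_le_tsum hpt (hgds.add hsumS)
  rw [hW.tsum_eq, hgds.tsum_add hsumS, Summable.tsum_finsetSum (fun j _ => hbds j)] at h1
  have h2 : ∑ j ∈ S, ∑' y, bd j y ≤
      ∑ j ∈ S, ((((1 + q) / (1 - q)) ^ k * ((1 + q) / 2) ^ (M - k)) * (2 / (1 - q))) :=
    Finset.sum_le_sum fun j hj => bad_sum hq0 hq1 hzm hzp hk hx hL v hv τ hτ j
      (Finset.mem_filter.1 hj).2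
  have hcard : S.card = k := by
    rw [Fin.card_filter_val_lt]; exact min_eq_right hk
  rw [Finset.sum_const, hcard, nsmul_eq_mul] at h2
  linarith

end final

/-- Lemma 3.10: for fixed k there is c > 0 (depending only on q, ζ₋, ζ₊, k) such that
for every N = M+1 > k and X ∈ 𝔾_N, the Λ^N_{N−1}(X,·)-probability that the first k terms
of the variational series of Y coincide with those of X is at least 1 − e^{−cN}/c. -/
theorem first_terms_frozen (q zm zp : ℝ) (hq0 : 0 < q) (hq1 : q < 1) (hzm : zm < 0)
    (hzp : 0 < zp) (k : ℕ) (hk : 1 ≤ k) :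
    ∃ c : ℝ, 0 < c ∧
      ∀ M : ℕ, k ≤ M → ∀ X : Conf q zm zp (M+1), ∀ vX : Fin (M+1) → ℝ,
        IsVarSeries q zm zp X vX →
        1 - Real.exp (-c * (M+1)) / c ≤
          ∑' Y : {Y : Conf q zm zp M // ∃ vY : Fin M → ℝ,
              IsVarSeries q zm zp Y vY ∧
              ∀ i : Fin M, (i : ℕ) < k → vY i = vX i.castSucc},
            qlink q zm zp M X Y.1 := by
  have hq2 : 0 < 1 - q := by linarith
  have hr0 : 0 < (1 + q) / 2 := by linarith
  have hr1 : (1 + q) / 2 < 1 := by linarith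
  have hk0 : (0 : ℝ) < k := by exact_mod_cast hk
  set r := (1 + q) / 2 with hr
  set A : ℝ := k * (((1 + q) / (1 - q)) ^ k * (2 / (1 - q))) / r ^ (k + 1) with hA
  have hA0 : 0 < A := by positivity
  have hlog : 0 < -Real.log r := by linarith [Real.log_neg hr0 hr1]
  refine ⟨min (-Real.log r) (1 / A), lt_min hlog (by positivity), ?_⟩
  intro M hM X vX hvX
  refine le_trans ?_ (main_bound hq0 hq1 hzm hzp hM X vX hvX)
  set c := min (-Real.log r) (1 / A) with hc
  have hc0 : 0 < c := lt_min hlog (by positivity)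
  have hc1 : c ≤ -Real.log r := min_le_left _ _
  have hc2 : c ≤ 1 / A := min_le_right _ _
  have hAc : A ≤ 1 / c := by
    rw [le_div_iff₀ hc0]
    rw [le_div_iff₀ hA0] at hc2
    linarith
  have hexp : r ^ (M + 1) ≤ Real.exp (-c * (M + 1)) := by
    rw [← Real.exp_log (pow_pos hr0 (M + 1)), Real.log_pow]
    apply Real.exp_le_exp.2
    push_cast
    have : (0 : ℝ) ≤ M + 1 := by positivity
    nlinarith
  have hpow : r ^ (M + 1) = r ^ (M - k) * r ^ (k + 1) := by
    rw [← pow_add]; congr 1; omega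
  have h1 : (k : ℝ) * ((((1 + q) / (1 - q)) ^ k * r ^ (M - k)) * (2 / (1 - q))) =
      A * r ^ (M + 1) := by
    rw [hA, hpow]
    have : r ^ (k + 1) ≠ 0 := (pow_pos hr0 _).ne'
    generalize ((1 + q) / (1 - q)) ^ k = u
    field_simp
  rw [h1]
  have h2 : A * r ^ (M + 1) ≤ 1 / c * Real.exp (-c * (M + 1)) :=
    mul_le_mul hAc hexp (by positivity) (by positivity)
  have h3 : 1 / c * Real.exp (-c * (M + 1)) = Real.exp (-c * (M + 1)) / c := by ring
  linarith

end
end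

section
/- Let (α,β,γ,δ) be an admissible and nondegenerate quadruple and r ∈ ℤ. Then lim_{N→∞} (γδ)^{N−1} q^{−N(N−1)} · h_{N−r}(α,β,γq^{1−N},δq^{1−N}) / (k_{N−r}(α,β,γq^{1−N},δq^{1−N}))² = 𝔥_r, i.e. h_{N−r}/k_{N−r}² is asymptotically equivalent to q^{N(N−1)} (γδ)^{1−N} 𝔥_r as N → ∞. -/
open scoped BigOperators
open Classical

noncomputable section

/-- finite q-Pochhammer symbol (a;q)_n in ℂ. -/
def qpochC (a : ℂ) (q : ℝ) (n : ℕ) : ℂ := ∏ m ∈ Finset.range n, (1 - a * (q : ℂ) ^ m)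

/-- infinite q-Pochhammer symbol (a;q)_∞ in ℂ. -/
def qpochInf (a : ℂ) (q : ℝ) : ℂ := ∏' m : ℕ, (1 - a * (q : ℂ) ^ m)

/-- theta function θ_q(u) = (u;q)_∞ (q/u;q)_∞. -/
def thetaQ (q : ℝ) (u : ℂ) : ℂ := qpochInf u q * qpochInf ((q : ℂ) / u) q

/-- admissible pair of parameters. -/
def AdmissiblePair (q zm zp : ℝ) (a b : ℂ) : Prop :=
  a ≠ 0 ∧ b ≠ 0 ∧
    ((a.im ≠ 0 ∧ b = (starRingEnd ℂ) a) ∨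
     (a.im = 0 ∧ b.im = 0 ∧
       ∃ s t : ℝ, s ∈ Lambda q zm zp ∧ t ∈ Lambda q zm zp ∧ s < t ∧
         (∀ u ∈ Lambda q zm zp, ¬ (s < u ∧ u < t)) ∧
         a⁻¹.re ∈ Set.Ioo s t ∧ b⁻¹.re ∈ Set.Ioo s t))

/-- admissible nondegenerate quadruple: (α,β), (γ,δ) admissible pairs and γδq > αβ. -/
def AdmissibleNondeg (q zm zp : ℝ) (al be ga de : ℂ) : Prop :=
  AdmissiblePair q zm zp al be ∧ AdmissiblePair q zm zp ga de ∧
    (al * be).re < (ga * de).re * q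

/-- the weight w(x; a,b,c,d) = |x| (ax;q)_∞(bx;q)_∞ / ((cx;q)_∞(dx;q)_∞). -/
def weightC (q : ℝ) (a b c d : ℂ) (x : ℝ) : ℂ :=
  (|x| : ℝ) * (qpochInf (a * x) q * qpochInf (b * x) q) /
    (qpochInf (c * x) q * qpochInf (d * x) q)

/-- pseudo big q-Jacobi polynomial P_n(x; a,b,c,d). -/
def pbqJ (q : ℝ) (a b c d : ℂ) (n : ℕ) (x : ℂ) : ℂ :=
  ∑ k ∈ Finset.range (n + 1),
    qpochC ((q : ℂ) ^ (-(n : ℤ))) q k * qpochC (c * d * (q : ℂ) ^ ((n : ℤ) + 1) / (a * b)) q k *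
        qpochC (c * x) q k /
      (qpochC (c * (q : ℂ) / b) q k * qpochC (c * (q : ℂ) / a) q k * qpochC (q : ℂ) q k) *
      (q : ℂ) ^ k

/-- leading coefficient k_n(a,b,c,d) of P_n. -/
def kCoeff (q : ℝ) (a b c d : ℂ) (n : ℕ) : ℂ :=
  c ^ n * qpochC (c * d * (q : ℂ) ^ ((n : ℤ) + 1) / (a * b)) q n /
    (qpochC (c * (q : ℂ) / b) q n * qpochC (c * (q : ℂ) / a) q n)

/-- the q-hypergeometric series ₂φ₁(A,B;C;q,Z). -/
def phi21 (q : ℝ) (A B C Z : ℂ) : ℂ :=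
  ∑' m : ℕ, qpochC A q m * qpochC B q m / (qpochC C q m * qpochC (q : ℂ) q m) * Z ^ m

/-- principal branch square root. -/
def csqrt (z : ℂ) : ℂ := z ^ (1 / 2 : ℂ)


/-- the weight w_N with parameters (α,β,γq^{1−N},δq^{1−N}). -/
def wN (q : ℝ) (al be ga de : ℂ) (N : ℕ) (x : ℝ) : ℂ :=
  weightC q al be (ga * (q : ℂ) ^ (1 - (N : ℤ))) (de * (q : ℂ) ^ (1 - (N : ℤ))) x

/-- the function 𝔉_r(x). -/
def scrF (q : ℝ) (al be ga de : ℂ) (r : ℤ) (x : ℝ) : ℂ :=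
  csqrt ((|x| : ℝ) * qpochInf (al * x) q * qpochInf (be * x) q /
      (thetaQ q (ga * x) * thetaQ q (de * x))) *
    (x : ℂ) ^ (1 - r) *
    (qpochInf (be * (q : ℂ) ^ (r - 1) / ga) q * qpochInf ((q : ℂ) ^ r / (de * x)) q /
      qpochInf (al * be * (q : ℂ) ^ (2 * r - 2) / (ga * de)) q) *
    phi21 q (al * (q : ℂ) ^ (r - 1) / de) ((q : ℂ) / (be * x)) ((q : ℂ) ^ r / (de * x))
      (be * (q : ℂ) ^ (r - 1) / ga)

/-- the constant 𝔥_r. -/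
def scrH (q zm zp : ℝ) (al be ga de : ℂ) (r : ℤ) : ℂ :=
  (zp : ℂ) * ((ga * de) ^ r / (al * be)) *
    ((q : ℂ) ^ (2 - r ^ 2) / ((q : ℂ) ^ (3 - 2 * r) * ga * de / (al * be) - 1)) *
    (thetaQ q ((zm : ℂ) / (zp : ℂ)) * thetaQ q (ga * de * (zm : ℂ) * (zp : ℂ)) /
      (thetaQ q (ga * zm) * thetaQ q (de * zm) * thetaQ q (ga * zp) * thetaQ q (de * zp))) *
    (qpochInf (q : ℂ) q ^ 2 * qpochInf (al * (q : ℂ) ^ (r - 1) / de) q *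
        qpochInf (al * (q : ℂ) ^ (r - 1) / ga) q * qpochInf (be * (q : ℂ) ^ (r - 1) / de) q *
        qpochInf (be * (q : ℂ) ^ (r - 1) / ga) q /
      qpochInf (al * be * (q : ℂ) ^ (2 * r - 2) / (ga * de)) q ^ 2)

/-- the closed-form expression for h₀(a,b,c,d) = Σ_{x∈Λ} w(x;a,b,c,d). -/
def h0Closed (q zm zp : ℝ) (a b c d : ℂ) : ℂ :=
  (zp : ℂ) *
    (qpochInf (q : ℂ) q * qpochInf (a / c) q * qpochInf (a / d) q * qpochInf (b / c) q *
        qpochInf (b / d) q / qpochInf (a * b / ((q : ℂ) * c * d)) q) *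
    (thetaQ q ((zm : ℂ) / (zp : ℂ)) * thetaQ q (c * d * (zm : ℂ) * (zp : ℂ)) /
      (thetaQ q (c * zm) * thetaQ q (d * zm) * thetaQ q (c * zp) * thetaQ q (d * zp)))

/-- the closed-form expression for the squared norm h_n(a,b,c,d). -/
def hClosed (q zm zp : ℝ) (a b c d : ℂ) (n : ℕ) : ℂ :=
  h0Closed q zm zp a b c d *
    ((-1 : ℂ) ^ n * (c ^ 2 / (a * b)) ^ n * (q : ℂ) ^ (n * (n - 1) / 2) * (q : ℂ) ^ (2 * n) *
      (qpochC (q : ℂ) q n * qpochC ((q : ℂ) * d / a) q n * qpochC ((q : ℂ) * d / b) q n /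
        (qpochC ((q : ℂ) * c * d / (a * b)) q n * qpochC ((q : ℂ) * c / a) q n *
          qpochC ((q : ℂ) * c / b) q n)) *
      ((1 - (q : ℂ) * c * d / (a * b)) / (1 - (q : ℂ) ^ (2 * n + 1) * c * d / (a * b))))



lemma qp_summable (q : ℝ) (hq0 : 0 < q) (hq1 : q < 1) (x : ℂ) :
    Summable (fun m : ℕ => ‖-(x * (q : ℂ) ^ m)‖) := by
  have : (fun m : ℕ => ‖-(x * (q : ℂ) ^ m)‖) = fun m : ℕ => ‖x‖ * q ^ m := by
    funext m
    rw [norm_neg, norm_mul, norm_pow, Complex.norm_real, Real.norm_of_nonneg hq0.le]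
  rw [this]
  exact (summable_geometric_of_lt_one hq0.le hq1).mul_left _

lemma qp_mult (q : ℝ) (hq0 : 0 < q) (hq1 : q < 1) (x : ℂ) :
    Multipliable (fun m : ℕ => 1 - x * (q : ℂ) ^ m) := by
  simpa [sub_eq_add_neg] using multipliable_one_add_of_summable (qp_summable q hq0 hq1 x)

lemma qp_tendsto (q : ℝ) (hq0 : 0 < q) (hq1 : q < 1) (x : ℂ) :
    Filter.Tendsto (fun n => qpochC x q n) Filter.atTop (nhds (qpochInf x q)) :=
  (qp_mult q hq0 hq1 x).tendsto_prod_tprod_nat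

lemma qp_ne_zero (q : ℝ) (hq0 : 0 < q) (hq1 : q < 1) (x : ℂ)
    (h : ∀ m : ℕ, 1 - x * (q : ℂ) ^ m ≠ 0) : qpochInf x q ≠ 0 := by
  have := tprod_one_add_ne_zero_of_summable (f := fun m : ℕ => -(x * (q : ℂ) ^ m))
    (by simpa [sub_eq_add_neg] using h) (qp_summable q hq0 hq1 x)
  simpa [qpochInf, sub_eq_add_neg] using this

/-- either the infinite product is nonzero, or the finite ones vanish eventually. -/
lemma qp_zero (q : ℝ) (hq0 : 0 < q) (hq1 : q < 1) (x : ℂ) (h : qpochInf x q = 0) :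
    ∀ᶠ n in Filter.atTop, qpochC x q n = 0 := by
  by_contra hc
  refine qp_ne_zero q hq0 hq1 x ?_ h
  intro m hm
  apply hc
  filter_upwards [Filter.eventually_gt_atTop m] with n hn
  exact Finset.prod_eq_zero (Finset.mem_range.2 hn) hm

lemma qpC_bound (q : ℝ) (hq0 : 0 < q) (hq1 : q < 1) (x : ℂ) (n : ℕ) :
    ‖qpochC x q n - 1‖ ≤ Real.exp (‖x‖ * (1 - q)⁻¹) - 1 := by
  have h1 := Finset.norm_prod_one_add_sub_one_le (Finset.range n)
    (fun m : ℕ => -(x * (q : ℂ) ^ m))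
  have h2 : ∑ i ∈ Finset.range n, ‖-(x * (q : ℂ) ^ i)‖ ≤ ‖x‖ * (1 - q)⁻¹ := by
    refine ((qp_summable q hq0 hq1 x).sum_le_tsum _ (fun _ _ => norm_nonneg _)).trans ?_
    have : (fun m : ℕ => ‖-(x * (q : ℂ) ^ m)‖) = fun m : ℕ => ‖x‖ * q ^ m := by
      funext m
      rw [norm_neg, norm_mul, norm_pow, Complex.norm_real, Real.norm_of_nonneg hq0.le]
    rw [this, tsum_mul_left, tsum_geometric_of_lt_one hq0.le hq1]
  have h3 := Real.exp_le_exp.2 h2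
  simp only [← sub_eq_add_neg] at h1
  unfold qpochC
  linarith

lemma qpInf_bound (q : ℝ) (hq0 : 0 < q) (hq1 : q < 1) (x : ℂ) :
    ‖qpochInf x q - 1‖ ≤ Real.exp (‖x‖ * (1 - q)⁻¹) - 1 :=
  le_of_tendsto ((qp_tendsto q hq0 hq1 x).sub_const 1).norm
    (Filter.Eventually.of_forall (fun n => qpC_bound q hq0 hq1 x n))

lemma bound_tendsto (q : ℝ) (x : ℕ → ℂ) (hx : Filter.Tendsto x Filter.atTop (nhds 0)) :
    Filter.Tendsto (fun N => Real.exp (‖x N‖ * (1 - q)⁻¹) - 1) Filter.atTop (nhds 0) := by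
  have h := (Real.continuous_exp.tendsto _).comp ((hx.norm).mul_const ((1 - q)⁻¹))
  simpa using h.sub_const 1

lemma qpInf_one (q : ℝ) (hq0 : 0 < q) (hq1 : q < 1) (x : ℕ → ℂ)
    (hx : Filter.Tendsto x Filter.atTop (nhds 0)) :
    Filter.Tendsto (fun N => qpochInf (x N) q) Filter.atTop (nhds 1) := by
  rw [tendsto_iff_norm_sub_tendsto_zero]
  exact squeeze_zero (fun _ => norm_nonneg _) (fun N => qpInf_bound q hq0 hq1 (x N))
    (bound_tendsto q x hx)

lemma qpC_one (q : ℝ) (hq0 : 0 < q) (hq1 : q < 1) (x : ℕ → ℂ) (n : ℕ → ℕ)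
    (hx : Filter.Tendsto x Filter.atTop (nhds 0)) :
    Filter.Tendsto (fun N => qpochC (x N) q (n N)) Filter.atTop (nhds 1) := by
  rw [tendsto_iff_norm_sub_tendsto_zero]
  exact squeeze_zero (fun _ => norm_nonneg _) (fun N => qpC_bound q hq0 hq1 (x N) (n N))
    (bound_tendsto q x hx)

lemma qp_step (q : ℝ) (hq0 : 0 < q) (hq1 : q < 1) (x : ℂ) :
    qpochInf x q = (1 - x) * qpochInf (x * q) q := by
  have h1 := qp_tendsto q hq0 hq1 x
  have h2 := (qp_tendsto q hq0 hq1 (x * q)).const_mul (1 - x)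
  refine tendsto_nhds_unique ((Filter.tendsto_add_atTop_iff_nat 1).2 h1) (h2.congr ?_)
  intro n
  unfold qpochC
  rw [Finset.prod_range_succ', mul_comm]
  simp [pow_succ', mul_assoc]

lemma theta_step (q : ℝ) (hq0 : 0 < q) (hq1 : q < 1) (v : ℂ) (hv : v ≠ 0) :
    thetaQ q (v / q) = -(v / q) * thetaQ q v := by
  have hQ : (q : ℂ) ≠ 0 := by exact_mod_cast hq0.ne'
  unfold thetaQ
  rw [qp_step q hq0 hq1 (v / q), qp_step q hq0 hq1 (q / v)]
  have e1 : v / (q : ℂ) * q = v := by field_simp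
  have e2 : (q : ℂ) / (v / q) = q / v * q := by field_simp
  rw [e1, e2]
  have e3 : (1 - v / (q : ℂ)) = -(v / q) * (1 - q / v) := by field_simp; ring
  rw [e3]; ring

lemma theta_shift (q : ℝ) (hq0 : 0 < q) (hq1 : q < 1) (v : ℂ) (hv : v ≠ 0) (M : ℕ) :
    thetaQ q (v / (q : ℂ) ^ M) = (-v) ^ M * ((q : ℂ) ^ (M * (M + 1) / 2))⁻¹ * thetaQ q v := by
  have hQ : (q : ℂ) ≠ 0 := by exact_mod_cast hq0.ne'
  induction M with
  | zero => simp
  | succ M ih =>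
    have e : v / (q : ℂ) ^ (M + 1) = (v / (q : ℂ) ^ M) / q := by rw [pow_succ]; field_simp
    have e2 : (M + 1) * (M + 1 + 1) / 2 = M * (M + 1) / 2 + (M + 1) := by
      have : (M + 1) * (M + 1 + 1) = M * (M + 1) + (M + 1) * 2 := by ring
      rw [this, Nat.add_mul_div_right _ _ (by norm_num)]
    rw [e, theta_step q hq0 hq1 _ (by positivity), ih, e2, pow_succ, pow_add, pow_succ]
    field_simp

lemma theta_ratio (q zm zp : ℝ) (hq0 : 0 < q) (hq1 : q < 1) (hzm : zm ≠ 0) (hzp : zp ≠ 0)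
    (ga de : ℂ) (hg : ga ≠ 0) (hd : de ≠ 0) (M : ℕ) :
    thetaQ q (ga / (q : ℂ) ^ M * (de / (q : ℂ) ^ M) * zm * zp) /
      (thetaQ q (ga / (q : ℂ) ^ M * zm) * thetaQ q (de / (q : ℂ) ^ M * zm) *
        thetaQ q (ga / (q : ℂ) ^ M * zp) * thetaQ q (de / (q : ℂ) ^ M * zp)) =
    (q : ℂ) ^ M * (thetaQ q (ga * de * zm * zp) /
      (thetaQ q (ga * zm) * thetaQ q (de * zm) * thetaQ q (ga * zp) * thetaQ q (de * zp))) := by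
  have hQ : (q : ℂ) ≠ 0 := by exact_mod_cast hq0.ne'
  have hm : (zm : ℂ) ≠ 0 := by exact_mod_cast hzm
  have hp : (zp : ℂ) ≠ 0 := by exact_mod_cast hzp
  have e0 : ga / (q : ℂ) ^ M * (de / (q : ℂ) ^ M) * zm * zp
      = (ga * de * zm * zp) / (q : ℂ) ^ (2 * M) := by
    rw [two_mul, pow_add]; field_simp
  have e (a : ℂ) (z : ℝ) : a / (q : ℂ) ^ M * z = (a * z) / (q : ℂ) ^ M := by field_simp
  rw [e0, e, e, e, e, theta_shift q hq0 hq1 _ (by positivity),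
    theta_shift q hq0 hq1 _ (by positivity), theta_shift q hq0 hq1 _ (by positivity),
    theta_shift q hq0 hq1 _ (by positivity), theta_shift q hq0 hq1 _ (by positivity)]
  have h2 : M * (M + 1) / 2 * 2 = M * (M + 1) :=
    Nat.div_mul_cancel (Nat.even_mul_succ_self M).two_dvd
  have h3 : 2 * M * (2 * M + 1) / 2 = M * (2 * M + 1) := by
    rw [mul_assoc, Nat.mul_div_cancel_left _ (by norm_num)]
  rw [h3]
  generalize hW : (q : ℂ) ^ (M * (M + 1) / 2) = W
  have hW0 : W ≠ 0 := by rw [← hW]; positivity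
  have hW4 : W ^ 4 = (q : ℂ) ^ M * (q : ℂ) ^ (M * (2 * M + 1)) := by
    rw [← hW, ← pow_mul, ← pow_add]
    congr 1
    have : M * (M + 1) / 2 * 4 = (M * (M + 1) / 2 * 2) * 2 := by ring
    rw [this, h2]; ring
  have hR0 : (q : ℂ) ^ (M * (2 * M + 1)) ≠ 0 := by positivity
  generalize (q : ℂ) ^ (M * (2 * M + 1)) = R at *
  generalize thetaQ q (ga * de * zm * zp) = t0
  generalize thetaQ q (ga * zm) = t1
  generalize thetaQ q (de * zm) = t2
  generalize thetaQ q (ga * zp) = t3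
  generalize thetaQ q (de * zp) = t4
  generalize (q : ℂ) ^ M = B at *
  have hm1 : ((-1 : ℂ)) ^ (2 * M) = 1 := by rw [pow_mul]; norm_num
  have hs : (-(ga * de * zm * zp)) ^ (2 * M) = (-(ga * zm)) ^ M * (-(de * zm)) ^ M *
      (-(ga * zp)) ^ M * (-(de * zp)) ^ M := by
    rw [pow_mul, ← mul_pow, ← mul_pow, ← mul_pow]; congr 1; ring
  rw [hs]
  have a1 : (-(ga * (zm : ℂ))) ^ M ≠ 0 := pow_ne_zero _ (by simp [hg, hm])
  have a2 : (-(de * (zm : ℂ))) ^ M ≠ 0 := pow_ne_zero _ (by simp [hd, hm])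
  have a3 : (-(ga * (zp : ℂ))) ^ M ≠ 0 := pow_ne_zero _ (by simp [hg, hp])
  have a4 : (-(de * (zp : ℂ))) ^ M ≠ 0 := pow_ne_zero _ (by simp [hd, hp])
  generalize (-(ga * (zm : ℂ))) ^ M = A1 at *
  generalize (-(de * (zm : ℂ))) ^ M = A2 at *
  generalize (-(ga * (zp : ℂ))) ^ M = A3 at *
  generalize (-(de * (zp : ℂ))) ^ M = A4 at *
  have hB : B = W ^ 4 * R⁻¹ := by rw [hW4]; field_simp
  rw [hB]
  by_cases k1 : t1 = 0; · simp [k1]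
  by_cases k2 : t2 = 0; · simp [k2]
  by_cases k3 : t3 = 0; · simp [k3]
  by_cases k4 : t4 = 0; · simp [k4]
  field_simp

/-- reversal of a finite q-Pochhammer symbol. -/
lemma qp_rev (q : ℝ) (hq0 : 0 < q) (x b : ℂ) (n : ℕ) (hb : b ≠ 0)
    (h : x * b * (q : ℂ) ^ n = q) :
    qpochC x q n = (-b⁻¹) ^ n * ((q : ℂ) ^ (n * (n - 1) / 2))⁻¹ * qpochC b q n := by
  have hQ : (q : ℂ) ≠ 0 := by exact_mod_cast hq0.ne'
  unfold qpochC
  rw [← Finset.prod_range_reflect, ← Finset.sum_range_id, ← Finset.prod_pow_eq_pow_sum,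
    ← Finset.prod_inv_distrib]
  have : (-b⁻¹) ^ n = ∏ _m ∈ Finset.range n, (-b⁻¹) := by simp
  rw [this, ← Finset.prod_mul_distrib, ← Finset.prod_mul_distrib]
  refine Finset.prod_congr rfl fun m hm => ?_
  have hm := Finset.mem_range.1 hm
  obtain ⟨k, rfl⟩ : ∃ k, n = m + k + 1 := ⟨n - m - 1, by omega⟩
  have e : m + k + 1 - 1 - m = k := by omega
  have hx : x * (q : ℂ) ^ k * (b * (q : ℂ) ^ m) = 1 := by
    apply mul_right_cancel₀ hQ
    rw [one_mul]; rw [pow_succ, pow_add] at h; linear_combination h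
  have hx2 : x * (q : ℂ) ^ k = (b * (q : ℂ) ^ m)⁻¹ := eq_inv_of_mul_eq_one_left hx
  rw [e, hx2]
  field_simp
  ring

set_option maxHeartbeats 2000000 in
/-- the purely algebraic part. -/
lemma alg_split (Gp Qp h0 s cc W Q2 p A1 p1 A2 p2 A3 p3 A4 p4 F f K k m C E e : ℂ)
    (hQp : Qp ≠ 0) (hA3 : A3 ≠ 0) (hA4 : A4 ≠ 0) (hF : F ≠ 0) (hC : C ≠ 0) (hE : E ≠ 0) :
    Gp / Qp * (h0 * (s * cc * W * Q2 * (p * (A1 * p1) * (A2 * p2) /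
      ((F * f) * (A3 * p3) * (A4 * p4))) * ((K * k) / m))) /
      (C * (E * e) / ((A4 * p4) * (A3 * p3))) ^ 2 =
    (Gp / Qp * s * cc * W * Q2 * A1 * A2 * A3 * A4 * K / (F * C ^ 2 * E ^ 2)) *
      (h0 * (p * p1 * p2 * p3 * p4 * k / (f * e ^ 2 * m))) := by
  by_cases k3 : p3 = 0; · simp [k3]
  by_cases k4 : p4 = 0; · simp [k4]
  by_cases kf : f = 0; · simp [kf]
  by_cases ke : e = 0; · simp [ke]
  by_cases km : m = 0; · simp [km]
  field_simp

lemma const_eq (Q : ℂ) (hQ : Q ≠ 0) (al be ga de : ℂ) (ha : al ≠ 0) (hb : be ≠ 0) (hg : ga ≠ 0)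
    (hd : de ≠ 0) (r : ℤ) (n M : ℕ) (hn : (n : ℤ) = (M : ℤ) + 1 - r) (W B T : ℂ) (hW : W ≠ 0)
    (hB : B = Q ^ M) (hT : T = Q ^ r) :
    (((ga * de) ^ M / Q ^ ((M + 1) * M) * (-1) ^ n * ((ga / B) ^ 2 / (al * be)) ^ n * W * Q ^ (2 * n)
      * ((-(al * T / (Q * de))⁻¹) ^ n * W⁻¹) * ((-(be * T / (Q * de))⁻¹) ^ n * W⁻¹)
      * ((-(al * T / (Q * ga))⁻¹) ^ n * W⁻¹) * ((-(be * T / (Q * ga))⁻¹) ^ n * W⁻¹)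
      * (-(Q * (ga * de) / (al * be * B ^ 2))) /
      (((-(al * be * B * T / (ga * de * Q))⁻¹) ^ n * W⁻¹) * ((ga / B) ^ n) ^ 2 *
        ((-(al * be * T ^ 2 / (ga * de * Q ^ 2))⁻¹) ^ n * W⁻¹) ^ 2)) * B) =
    -((ga * de) ^ r / (al * be) * Q ^ (2 - r ^ 2)) := by
  have hB0 : B ≠ 0 := by rw [hB]; exact pow_ne_zero _ hQ
  have hT0 : T ≠ 0 := by rw [hT]; exact zpow_ne_zero _ hQ
  have hG0 : ga * de ≠ 0 := mul_ne_zero hg hd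
  have hG : (ga * de) ^ M * (ga * de) = (ga * de) ^ r * (ga * de) ^ n := by
    rw [← pow_succ, ← zpow_natCast, ← zpow_natCast, ← zpow_add₀ hG0]
    congr 1; push_cast; omega
  have hk : (Q * B * T) ^ n * Q ^ 2 = Q ^ (2 - r ^ 2) * Q ^ ((M + 1) * M) * (Q * B) := by
    have e1 : Q * B * T = Q ^ ((M : ℤ) + 1 + r) := by
      rw [hB, hT, zpow_add₀ hQ, zpow_add₀ hQ, zpow_natCast, zpow_one]; ring
    have e2 : Q * B = Q ^ ((M : ℤ) + 1) := by
      rw [hB, zpow_add₀ hQ, zpow_natCast, zpow_one]; ring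
    rw [e1, e2, ← zpow_natCast, ← zpow_natCast, ← zpow_natCast, ← zpow_mul, ← zpow_add₀ hQ,
      ← zpow_add₀ hQ, ← zpow_add₀ hQ]
    congr 1
    rw [hn]; push_cast; ring
  have hbr : (-1 : ℂ) ^ n * ((ga / B) ^ 2 / (al * be)) ^ n * Q ^ (2 * n)
      * (-(al * T / (Q * de))⁻¹) ^ n * (-(be * T / (Q * de))⁻¹) ^ n
      * (-(al * T / (Q * ga))⁻¹) ^ n * (-(be * T / (Q * ga))⁻¹) ^ n /
      ((-(al * be * B * T / (ga * de * Q))⁻¹) ^ n * ((ga / B) ^ n) ^ 2 *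
        ((-(al * be * T ^ 2 / (ga * de * Q ^ 2))⁻¹) ^ n) ^ 2) = (Q * B * T) ^ n / (ga * de) ^ n := by
    rw [pow_mul, pow_right_comm (ga / B) n 2, pow_right_comm _ n 2]
    simp only [← mul_pow, ← div_pow]
    congr 1
    field_simp
  have step : ∀ a1 a2 a3 a4 a5 a6 a7 a8 a9 x y K Bv : ℂ,
      (x / y * a1 * a2 * W * a3 * (a4 * W⁻¹) * (a5 * W⁻¹) * (a6 * W⁻¹) * (a7 * W⁻¹) * K /
        ((a8 * W⁻¹) * a9 ^ 2 * (Bv * W⁻¹) ^ 2)) * B =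
      x / y * K * B * (a1 * a2 * a3 * a4 * a5 * a6 * a7 / (a8 * a9 ^ 2 * Bv ^ 2)) := by
    intro a1 a2 a3 a4 a5 a6 a7 a8 a9 x y K Bv
    simp only [div_eq_mul_inv, mul_inv, mul_pow, inv_inv, inv_pow]
    have : W * W⁻¹ = 1 := mul_inv_cancel₀ hW
    have h4 : W * W⁻¹ * W⁻¹ * W⁻¹ * W⁻¹ * W * W ^ 2 = 1 := by field_simp
    linear_combination (x * y⁻¹ * a1 * a2 * a3 * a4 * a5 * a6 * a7 * K * B * a8⁻¹ * (a9 ^ 2)⁻¹ *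
      (Bv ^ 2)⁻¹) * h4
  rw [step, hbr]
  have hGn : (ga * de) ^ n ≠ 0 := pow_ne_zero _ hG0
  have hY : Q ^ ((M + 1) * M) ≠ 0 := pow_ne_zero _ hQ
  generalize (ga * de) ^ n = g at *
  generalize Q ^ ((M + 1) * M) = Y at *
  have k1 : (ga * de) ^ M = (ga * de) ^ r * g / (ga * de) := by rw [← hG]; field_simp
  have k2 : (Q * B * T) ^ n = Q ^ (2 - r ^ 2) * Y * (Q * B) / Q ^ 2 := by rw [← hk]; field_simp
  rw [k1, k2]
  generalize (ga * de) ^ r = R at *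
  generalize Q ^ (2 - r ^ 2) = Z at *
  field_simp

set_option maxHeartbeats 2000000 in
lemma exact_form (q zm zp : ℝ) (hq0 : 0 < q) (hq1 : q < 1) (hzm : zm < 0)
    (hzp : 0 < zp) (al be ga de : ℂ) (ha : al ≠ 0) (hb : be ≠ 0) (hg : ga ≠ 0)
    (hd : de ≠ 0) (r : ℤ) (n M : ℕ) (hn : (n : ℤ) = (M : ℤ) + 1 - r) :
    (ga * de) ^ M / (q : ℂ) ^ ((M + 1) * M) *
          hClosed q zm zp al be (ga / (q : ℂ) ^ M) (de / (q : ℂ) ^ M) n /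
          kCoeff q al be (ga / (q : ℂ) ^ M) (de / (q : ℂ) ^ M) n ^ 2 =
    (zp : ℂ) * ((ga * de) ^ r / (al * be)) *
    ((q : ℂ) ^ (2 - r ^ 2) / ((q : ℂ) ^ (3 - 2 * r) * ga * de / (al * be) - 1)) *
    (thetaQ q ((zm : ℂ) / (zp : ℂ)) * thetaQ q (ga * de * (zm : ℂ) * (zp : ℂ)) /
      (thetaQ q (ga * zm) * thetaQ q (de * zm) * thetaQ q (ga * zp) * thetaQ q (de * zp))) *
    (((qpochInf (q : ℂ) q * qpochC q q n * qpochC (al * (q : ℂ) ^ (r - 1) / de) q n *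
        qpochC (al * (q : ℂ) ^ (r - 1) / ga) q n * qpochC (be * (q : ℂ) ^ (r - 1) / de) q n *
        qpochC (be * (q : ℂ) ^ (r - 1) / ga) q n) /
      qpochC (al * be * (q : ℂ) ^ (2 * r - 2) / (ga * de)) q n ^ 2) *
     ((qpochInf (al / ga * (q : ℂ) ^ M) q * qpochInf (al / de * (q : ℂ) ^ M) q *
       qpochInf (be / ga * (q : ℂ) ^ M) q * qpochInf (be / de * (q : ℂ) ^ M) q *
       (1 - al * be / (ga * de * q) * ((q : ℂ) ^ M) ^ 2)) /
      (qpochInf (al * be / (ga * de * q) * ((q : ℂ) ^ M) ^ 2) q *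
       qpochC (al * be * (q : ℂ) ^ r / (ga * de * q) * (q : ℂ) ^ M) q n))) := by
  have hQ : (q : ℂ) ≠ 0 := by exact_mod_cast hq0.ne'
  have hth := theta_ratio q zm zp hq0 hq1 hzm.ne hzp.ne' ga de hg hd M
  have hr1 : (q : ℂ) ^ (r - 1) = (q : ℂ) ^ r / q := by rw [zpow_sub₀ hQ, zpow_one]
  have hr2 : (q : ℂ) ^ (2 * r - 2) = ((q : ℂ) ^ r) ^ 2 / (q : ℂ) ^ 2 := by
    rw [zpow_sub₀ hQ, mul_comm, zpow_mul]; norm_cast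
  have hr3 : (q : ℂ) ^ (3 - 2 * r) = (q : ℂ) ^ 3 / ((q : ℂ) ^ r) ^ 2 := by
    rw [zpow_sub₀ hQ, mul_comm 2 r, zpow_mul]; norm_cast
  have hX : (q : ℂ) ^ r * (q : ℂ) ^ n = q * (q : ℂ) ^ M := by
    rw [← zpow_natCast, ← zpow_natCast, ← zpow_add₀ hQ, ← zpow_one_add₀ hQ]
    congr 1; omega
  have hn1 : (q : ℂ) ^ ((n : ℤ) + 1) = (q : ℂ) ^ n * q := by
    rw [zpow_add₀ hQ, zpow_natCast, zpow_one]
  have hn2 : (q : ℂ) ^ (2 * n + 1) = ((q : ℂ) ^ n) ^ 2 * q := by ring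
  have hW : (q : ℂ) ^ (n * (n - 1) / 2) ≠ 0 := pow_ne_zero _ hQ
  have hc := const_eq (q : ℂ) hQ al be ga de ha hb hg hd r n M hn _ _ _ hW rfl rfl
  unfold hClosed kCoeff h0Closed
  rw [hr1, hr2, hr3, hn1, hn2]
  have hT0 : (q : ℂ) ^ r ≠ 0 := zpow_ne_zero _ hQ
  have hB0 : (q : ℂ) ^ M ≠ 0 := pow_ne_zero _ hQ
  have hX0 : (q : ℂ) ^ n ≠ 0 := pow_ne_zero _ hQ
  have R := fun x b => qp_rev q hq0 x b n
  generalize (q : ℂ) ^ (n * (n - 1) / 2) = W at *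
  have hXe : (q : ℂ) ^ n = q * (q : ℂ) ^ M / (q : ℂ) ^ r := by rw [← hX]; field_simp
  rw [hXe] at R ⊢
  generalize (q : ℂ) ^ r = T at *
  generalize (q : ℂ) ^ M = B at *
  rw [R (q * (de / B) / al) (al * T / (q * de)) (by positivity) (by field_simp),
    R (q * (de / B) / be) (be * T / (q * de)) (by positivity) (by field_simp),
    R (q * (ga / B) / al) (al * T / (q * ga)) (by positivity) (by field_simp),
    R (q * (ga / B) / be) (be * T / (q * ga)) (by positivity) (by field_simp),
    R (ga / B * q / al) (al * T / (q * ga)) (by positivity) (by field_simp),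
    R (ga / B * q / be) (be * T / (q * ga)) (by positivity) (by field_simp),
    R (q * (ga / B) * (de / B) / (al * be)) (al * be * B * T / (ga * de * q)) (by positivity)
      (by field_simp),
    R (ga / B * (de / B) * (q * B / T * q) / (al * be)) (al * be * T ^ 2 / (ga * de * q ^ 2))
      (by positivity) (by field_simp)]
  have eK : 1 - (q : ℂ) * (ga / B) * (de / B) / (al * be) =
      (-(q * (ga * de) / (al * be * B ^ 2))) * (1 - al * be / (ga * de * q) * B ^ 2) := by
    field_simp; ring
  have em : 1 - (q * B / T) ^ 2 * q * (ga / B) * (de / B) / (al * be) =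
      -((q : ℂ) ^ 3 / T ^ 2 * ga * de / (al * be) - 1) := by
    field_simp; ring
  rw [eK, em]
  have nz : ∀ x : ℂ, x ≠ 0 → (-x⁻¹) ^ n * W⁻¹ ≠ 0 := fun x hx =>
    mul_ne_zero (pow_ne_zero _ (neg_ne_zero.2 (inv_ne_zero hx))) (inv_ne_zero hW)
  rw [alg_split _ _ _ _ _ _ _ _ _ _ _ _ _ _ _ _ _ _ _ _ _ _ _ _ (by positivity)
    (nz _ (by positivity)) (nz _ (by positivity)) (nz _ (by positivity)) (by positivity)
    (nz _ (by positivity))]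
  have f1 : al / (ga / B) = al / ga * B := by field_simp
  have f2 : al / (de / B) = al / de * B := by field_simp
  have f3 : be / (ga / B) = be / ga * B := by field_simp
  have f4 : be / (de / B) = be / de * B := by field_simp
  have f5 : al * be / ((q : ℂ) * (ga / B) * (de / B)) = al * be / (ga * de * q) * B ^ 2 := by
    field_simp
  have f6 : al * (T / q) / de = al * T / (q * de) := by field_simp
  have f7 : al * (T / q) / ga = al * T / (q * ga) := by field_simp
  have f8 : be * (T / q) / de = be * T / (q * de) := by field_simp
  have f9 : be * (T / q) / ga = be * T / (q * ga) := by field_simp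
  have f10 : al * be * T / (ga * de * q) * B = al * be * B * T / (ga * de * q) := by ring
  have f11 : al * be * (T ^ 2 / (q : ℂ) ^ 2) / (ga * de) = al * be * T ^ 2 / (ga * de * q ^ 2) := by
    field_simp
  rw [f1, f2, f3, f4, f5, f6, f7, f8, f9, f10, f11]
  rw [mul_div_assoc (thetaQ q ((zm : ℂ) / (zp : ℂ))), hth]
  rw [mul_div_assoc (thetaQ q ((zm : ℂ) / (zp : ℂ)))]
  generalize thetaQ q (ga * de * (zm : ℂ) * (zp : ℂ)) / _ = TH
  generalize hCC : (_ / _ : ℂ) = CC at hc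
  generalize (q : ℂ) ^ 3 / T ^ 2 * ga * de / (al * be) - 1 = m
  generalize 1 - al * be / (ga * de * q) * B ^ 2 = k
  generalize qpochInf (al * be / (ga * de * q) * B ^ 2) q = i5
  generalize qpochInf (al / ga * B) q = i1
  generalize qpochInf (al / de * B) q = i2
  generalize qpochInf (be / ga * B) q = i3
  generalize qpochInf (be / de * B) q = i4
  generalize qpochInf (q : ℂ) q = i0
  generalize qpochC (q : ℂ) q n = p0
  generalize qpochC (al * T / (q * de)) q n = p1
  generalize qpochC (be * T / (q * de)) q n = p2
  generalize qpochC (al * T / (q * ga)) q n = p3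
  generalize qpochC (be * T / (q * ga)) q n = p4
  generalize qpochC (al * be * B * T / (ga * de * q)) q n = f
  generalize qpochC (al * be * T ^ 2 / (ga * de * q ^ 2)) q n = e
  generalize thetaQ q ((zm : ℂ) / (zp : ℂ)) = t0
  have hc2 : CC * B * (-m⁻¹) = (ga * de) ^ r / (al * be) * ((q : ℂ) ^ (2 - r ^ 2) / m) := by
    rw [hc, div_eq_mul_inv _ m]; ring
  have lhs : CC * (zp * (i0 * i1 * i2 * i3 * i4 / i5) * (t0 * (B * TH)) *
      (p0 * p1 * p2 * p3 * p4 * k / (f * e ^ 2 * -m))) =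
      (CC * B * (-m⁻¹)) * (zp * (i0 * i1 * i2 * i3 * i4 / i5) * (t0 * TH) *
      (p0 * p1 * p2 * p3 * p4 * k / (f * e ^ 2))) := by
    rw [mul_neg, div_neg]
    simp only [div_eq_mul_inv, mul_inv]
    ring
  rw [lhs, hc2]
  simp only [div_eq_mul_inv, mul_inv]
  ring

/-- Proposition 5.6: for an admissible nondegenerate quadruple and r ∈ ℤ,
h_{N−r}(α,β,γq^{1−N},δq^{1−N}) / k_{N−r}(α,β,γq^{1−N},δq^{1−N})²
is asymptotically q^{N(N−1)}(γδ)^{1−N} 𝔥_r, i.e.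
(γδ)^{N−1} q^{−N(N−1)} h_{N−r}/k_{N−r}² → 𝔥_r as N → ∞. -/
theorem norm_asymptotics (q zm zp : ℝ) (hq0 : 0 < q) (hq1 : q < 1) (hzm : zm < 0)
    (hzp : 0 < zp) (al be ga de : ℂ) (hadm : AdmissibleNondeg q zm zp al be ga de)
    (r : ℤ) :
    Filter.Tendsto
      (fun N : ℕ =>
        (ga * de) ^ (N - 1) / (q : ℂ) ^ (N * (N - 1)) *
          hClosed q zm zp al be (ga * (q : ℂ) ^ (1 - (N : ℤ))) (de * (q : ℂ) ^ (1 - (N : ℤ)))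
            (((N : ℤ) - r).toNat) /
          kCoeff q al be (ga * (q : ℂ) ^ (1 - (N : ℤ))) (de * (q : ℂ) ^ (1 - (N : ℤ)))
            (((N : ℤ) - r).toNat) ^ 2)
      Filter.atTop (nhds (scrH q zm zp al be ga de r)) := by
  obtain ⟨⟨ha, hb, -⟩, ⟨hg, hd, -⟩, -⟩ := hadm
  have hQ : (q : ℂ) ≠ 0 := by exact_mod_cast hq0.ne'
  rw [← Filter.tendsto_add_atTop_iff_nat 1]
  have hnt : Filter.Tendsto (fun M : ℕ => ((M : ℤ) + 1 - r).toNat) Filter.atTop Filter.atTop := by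
    rw [Filter.tendsto_atTop]
    intro b
    filter_upwards [Filter.eventually_ge_atTop (b + r.toNat)] with M hM
    omega
  have hpow : Filter.Tendsto (fun M : ℕ => (q : ℂ) ^ M) Filter.atTop (nhds 0) := by
    apply tendsto_pow_atTop_nhds_zero_of_norm_lt_one
    rw [Complex.norm_real, Real.norm_of_nonneg hq0.le]; exact hq1
  have hc1 : ∀ x : ℂ, Filter.Tendsto (fun M : ℕ => x * (q : ℂ) ^ M) Filter.atTop (nhds 0) := by
    intro x; simpa using hpow.const_mul x
  have hc2 : ∀ x : ℂ, Filter.Tendsto (fun M : ℕ => x * ((q : ℂ) ^ M) ^ 2) Filter.atTop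
      (nhds 0) := by
    intro x; simpa using (hpow.pow 2).const_mul x
  have hP : ∀ x : ℂ, Filter.Tendsto (fun M : ℕ => qpochC x q (((M : ℤ) + 1 - r).toNat))
      Filter.atTop (nhds (qpochInf x q)) := fun x => (qp_tendsto q hq0 hq1 x).comp hnt
  have hI : ∀ x : ℂ, Filter.Tendsto (fun M : ℕ => qpochInf (x * (q : ℂ) ^ M) q)
      Filter.atTop (nhds 1) := fun x => qpInf_one q hq0 hq1 _ (hc1 x)
  have hI2 : ∀ x : ℂ, Filter.Tendsto (fun M : ℕ => qpochInf (x * ((q : ℂ) ^ M) ^ 2) q)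
      Filter.atTop (nhds 1) := fun x => qpInf_one q hq0 hq1 _ (hc2 x)
  have hdiv : Filter.Tendsto (fun M : ℕ =>
      ((qpochInf (q : ℂ) q * qpochC q q (((M : ℤ) + 1 - r).toNat)
        * qpochC (al * (q : ℂ) ^ (r - 1) / de) q (((M : ℤ) + 1 - r).toNat) *
        qpochC (al * (q : ℂ) ^ (r - 1) / ga) q (((M : ℤ) + 1 - r).toNat)
        * qpochC (be * (q : ℂ) ^ (r - 1) / de) q (((M : ℤ) + 1 - r).toNat) *
        qpochC (be * (q : ℂ) ^ (r - 1) / ga) q (((M : ℤ) + 1 - r).toNat)) /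
      qpochC (al * be * (q : ℂ) ^ (2 * r - 2) / (ga * de)) q (((M : ℤ) + 1 - r).toNat) ^ 2))
      Filter.atTop (nhds (qpochInf (q : ℂ) q * qpochInf (q : ℂ) q *
        qpochInf (al * (q : ℂ) ^ (r - 1) / de) q *
        qpochInf (al * (q : ℂ) ^ (r - 1) / ga) q * qpochInf (be * (q : ℂ) ^ (r - 1) / de) q *
        qpochInf (be * (q : ℂ) ^ (r - 1) / ga) q /
      qpochInf (al * be * (q : ℂ) ^ (2 * r - 2) / (ga * de)) q ^ 2)) := by
    by_cases h0 : qpochInf (al * be * (q : ℂ) ^ (2 * r - 2) / (ga * de)) q = 0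
    · rw [h0]
      refine Filter.Tendsto.congr' (f₁ := fun _ => 0) ?_ (by simp)
      filter_upwards [hnt.eventually (qp_zero q hq0 hq1 _ h0)] with M hM
      rw [hM]; simp
    · exact ((((((hP _).const_mul _).mul (hP _)).mul (hP _)).mul (hP _)).mul (hP _)).div
        ((hP _).pow 2) (pow_ne_zero _ h0)
  have hone := (((((hI (al / ga)).mul (hI (al / de))).mul (hI (be / ga))).mul
    (hI (be / de))).mul ((hc2 (al * be / (ga * de * q))).const_sub 1)).div
    ((hI2 (al * be / (ga * de * q))).mul
      (qpC_one q hq0 hq1 _ (fun M : ℕ => ((M : ℤ) + 1 - r).toNat)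
        (hc1 (al * be * (q : ℂ) ^ r / (ga * de * q))))) (by norm_num)
  have key := (hdiv.mul hone).const_mul ((zp : ℂ) * ((ga * de) ^ r / (al * be)) *
    ((q : ℂ) ^ (2 - r ^ 2) / ((q : ℂ) ^ (3 - 2 * r) * ga * de / (al * be) - 1)) *
    (thetaQ q ((zm : ℂ) / (zp : ℂ)) * thetaQ q (ga * de * (zm : ℂ) * (zp : ℂ)) /
      (thetaQ q (ga * zm) * thetaQ q (de * zm) * thetaQ q (ga * zp) * thetaQ q (de * zp))))
  unfold scrH
  rw [sq (qpochInf (q : ℂ) q)]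
  simp only [mul_one, sub_zero, div_one] at key
  refine key.congr' ?_
  filter_upwards [Filter.eventually_ge_atTop r.toNat] with M hM
  have hn : ((((M : ℤ) + 1 - r).toNat : ℕ) : ℤ) = (M : ℤ) + 1 - r := by omega
  have hex := exact_form q zm zp hq0 hq1 hzm hzp al be ga de ha hb hg hd r _ M hn
  have e1 : (q : ℂ) ^ (1 - ((M + 1 : ℕ) : ℤ)) = ((q : ℂ) ^ M)⁻¹ := by
    rw [← zpow_natCast, ← zpow_neg]; congr 1; push_cast; ring
  have e2 : (((M + 1 : ℕ) : ℤ) - r).toNat = ((M : ℤ) + 1 - r).toNat := by push_cast; rfl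
  rw [e1, e2, Nat.add_sub_cancel, ← div_eq_mul_inv, ← div_eq_mul_inv]
  exact hex.symm

end
end

section
/- Let (a,b) and (c,d) be admissible pairs. Then for each ζ ∈ {ζ₋, ζ₊}, lim_{n→∞} (cdq/(ab))^n · w(ζ q^{−n}; a,b,c,d) = |ζ| · θ_q(aζ) θ_q(bζ) / (θ_q(cζ) θ_q(dζ)); in particular, w(x; a,b,c,d) is asymptotically equivalent to a positive constant times (ab/(cdq))^n along x = ζ q^{−n} as n → +∞. -/
open scoped BigOperators
open Classical

noncomputable section

lemma aux_summable (q : ℝ) (hq0 : 0 < q) (hq1 : q < 1) (u : ℂ) :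
    Summable (fun m : ℕ => ‖-(u * (q : ℂ) ^ m)‖) := by
  have h : Summable (fun m : ℕ => ‖u‖ * q ^ m) :=
    (summable_geometric_of_lt_one hq0.le hq1).mul_left _
  refine h.congr (fun m => ?_)
  simp [abs_of_pos hq0]

lemma aux_mult (q : ℝ) (hq0 : 0 < q) (hq1 : q < 1) (u : ℂ) :
    Multipliable (fun m : ℕ => 1 - u * (q : ℂ) ^ m) := by
  have := multipliable_one_add_of_summable (aux_summable q hq0 hq1 u)
  simpa only [sub_eq_add_neg] using this

lemma aux_ne (q : ℝ) (hq0 : 0 < q) (hq1 : q < 1) (u : ℂ)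
    (h : ∀ m : ℕ, 1 - u * (q : ℂ) ^ m ≠ 0) : qpochInf u q ≠ 0 := by
  have := tprod_one_add_ne_zero_of_summable (f := fun m : ℕ => -(u * (q : ℂ) ^ m))
    (by intro m; simpa only [sub_eq_add_neg] using h m) (aux_summable q hq0 hq1 u)
  simpa only [qpochInf, sub_eq_add_neg] using this

lemma aux_step (q : ℝ) (hq0 : 0 < q) (hq1 : q < 1) (v : ℂ) :
    qpochInf v q = (1 - v) * qpochInf (v * q) q := by
  have e : ∀ m : ℕ, 1 - v * (q : ℂ) ^ (m + 1) = 1 - v * q * (q : ℂ) ^ m := fun m => by ring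
  have h : Multipliable (fun m : ℕ => 1 - v * (q : ℂ) ^ (m + 1)) :=
    (aux_mult q hq0 hq1 (v * q)).congr (fun m => (e m).symm)
  have h2 := tprod_eq_zero_mul' (f := fun m : ℕ => 1 - v * (q : ℂ) ^ m) h
  unfold qpochInf
  rw [h2, tprod_congr e, pow_zero, mul_one]

lemma aux_shift (q : ℝ) (hq0 : 0 < q) (hq1 : q < 1) (u : ℂ) (hu : u ≠ 0) (n : ℕ) :
    qpochInf (u * ((q : ℂ) ^ n)⁻¹) q * (∏ j ∈ Finset.range n, (q : ℂ) ^ (j + 1)) =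
      (-u) ^ n * (qpochInf u q * qpochC ((q : ℂ) / u) q n) := by
  have hqc : (q : ℂ) ≠ 0 := by exact_mod_cast hq0.ne'
  induction n with
  | zero => simp [qpochC]
  | succ n ih =>
    have e : u * ((q : ℂ) ^ (n + 1))⁻¹ * q = u * ((q : ℂ) ^ n)⁻¹ := by
      field_simp
      ring
    have e2 : (1 - u * ((q : ℂ) ^ (n + 1))⁻¹) * (q : ℂ) ^ (n + 1) =
        (-u) * (1 - (q : ℂ) / u * (q : ℂ) ^ n) := by
      field_simp
      ring
    rw [aux_step q hq0 hq1, e, Finset.prod_range_succ]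
    have e3 : qpochC ((q : ℂ) / u) q (n + 1) =
        qpochC ((q : ℂ) / u) q n * (1 - (q : ℂ) / u * (q : ℂ) ^ n) := by
      simp [qpochC, Finset.prod_range_succ]
    rw [e3, pow_succ (-u)]
    linear_combination (1 - u * ((q : ℂ) ^ (n + 1))⁻¹) * (q : ℂ) ^ (n + 1) * ih +
      (-u) ^ n * (qpochInf u q * qpochC ((q : ℂ) / u) q n) * e2

lemma aux_lim (q : ℝ) (hq0 : 0 < q) (hq1 : q < 1) (u : ℂ) :
    Filter.Tendsto (fun n : ℕ => qpochInf u q * qpochC ((q : ℂ) / u) q n) Filter.atTop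
      (nhds (thetaQ q u)) :=
  ((aux_mult q hq0 hq1 _).hasProd.tendsto_prod_nat).const_mul _

lemma aux_theta_ne (q : ℝ) (hq0 : 0 < q) (hq1 : q < 1) (u : ℂ) (hu : u ≠ 0)
    (h : ∀ k : ℤ, u * (q : ℂ) ^ k ≠ 1) : thetaQ q u ≠ 0 := by
  have hqc : (q : ℂ) ≠ 0 := by exact_mod_cast hq0.ne'
  refine mul_ne_zero (aux_ne q hq0 hq1 _ fun m hm => ?_) (aux_ne q hq0 hq1 _ fun m hm => ?_)
  · apply h m
    rw [zpow_natCast]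
    linear_combination -hm
  · apply h (-((m + 1 : ℕ) : ℤ))
    rw [zpow_neg, zpow_natCast]
    field_simp at hm ⊢
    linear_combination hm

lemma aux_real (q zm zp : ℝ) (ζ : ℝ) (hζ : ζ = zm ∨ ζ = zp) (c : ℂ)
    (H : c.im ≠ 0 ∨ ∃ s t : ℝ, (∀ u ∈ Lambda q zm zp, ¬ (s < u ∧ u < t)) ∧
      c⁻¹.re ∈ Set.Ioo s t) (k : ℤ) : c * ζ * (q : ℂ) ^ k ≠ 1 := by
  intro h
  have h1 : c⁻¹ = ((ζ * q ^ k : ℝ) : ℂ) := by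
    push_cast
    rw [mul_assoc] at h
    exact inv_eq_of_mul_eq_one_right h
  rcases H with H | ⟨s, t, hst, hI⟩
  · apply H
    rw [← inv_inv c, h1, ← Complex.ofReal_inv, Complex.ofReal_im]
  · rw [h1, Complex.ofReal_re] at hI
    refine hst _ ?_ hI
    rcases hζ with rfl | rfl
    · exact Or.inl ⟨k, rfl⟩
    · exact Or.inr ⟨k, rfl⟩

/-- Weight asymptotics along the lattice: for admissible pairs (a,b) and (c,d) and
ζ ∈ {ζ₋, ζ₊}, (cdq/(ab))ⁿ w(ζq^{−n}; a,b,c,d) → |ζ| θ_q(aζ)θ_q(bζ)/(θ_q(cζ)θ_q(dζ)),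
so w(x;a,b,c,d) ~ const·(ab/(cdq))ⁿ along x = ζq^{−n}. -/
theorem weight_asymptotics (q zm zp : ℝ) (hq0 : 0 < q) (hq1 : q < 1) (hzm : zm < 0)
    (hzp : 0 < zp) (a b c d : ℂ)
    (hab : AdmissiblePair q zm zp a b) (hcd : AdmissiblePair q zm zp c d)
    (ζ : ℝ) (hζ : ζ = zm ∨ ζ = zp) :
    Filter.Tendsto
      (fun n : ℕ =>
        (c * d * (q : ℂ) / (a * b)) ^ n * weightC q a b c d (ζ * q ^ (-(n : ℤ))))
      Filter.atTop
      (nhds ((|ζ| : ℝ) * thetaQ q (a * ζ) * thetaQ q (b * ζ) /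
        (thetaQ q (c * ζ) * thetaQ q (d * ζ)))) := by
  obtain ⟨ha, hb, -⟩ := hab
  obtain ⟨hc, hd, H⟩ := hcd
  have hζ0 : ζ ≠ 0 := by
    rcases hζ with rfl | rfl
    · exact hzm.ne
    · exact hzp.ne'
  have hζc : (ζ : ℂ) ≠ 0 := by exact_mod_cast hζ0
  have hqc : (q : ℂ) ≠ 0 := by exact_mod_cast hq0.ne'
  have Hc : c.im ≠ 0 ∨ ∃ s t : ℝ, (∀ u ∈ Lambda q zm zp, ¬ (s < u ∧ u < t)) ∧
      c⁻¹.re ∈ Set.Ioo s t := by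
    rcases H with ⟨h, -⟩ | ⟨-, -, s, t, -, -, -, h1, h2, -⟩
    · exact Or.inl h
    · exact Or.inr ⟨s, t, h1, h2⟩
  have Hd : d.im ≠ 0 ∨ ∃ s t : ℝ, (∀ u ∈ Lambda q zm zp, ¬ (s < u ∧ u < t)) ∧
      d⁻¹.re ∈ Set.Ioo s t := by
    rcases H with ⟨h, h'⟩ | ⟨-, -, s, t, -, -, -, h1, -, h2⟩
    · left
      rw [h']
      simpa using h
    · exact Or.inr ⟨s, t, h1, h2⟩
  have hcθ := aux_theta_ne q hq0 hq1 (c * ζ) (mul_ne_zero hc hζc)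
    (aux_real q zm zp ζ hζ c Hc)
  have hdθ := aux_theta_ne q hq0 hq1 (d * ζ) (mul_ne_zero hd hζc)
    (aux_real q zm zp ζ hζ d Hd)
  have L := aux_lim q hq0 hq1
  have main := (((L (a * ζ)).const_mul ((|ζ| : ℝ) : ℂ)).mul (L (b * ζ))).div
    ((L (c * ζ)).mul (L (d * ζ))) (mul_ne_zero hcθ hdθ)
  refine main.congr (fun n => ?_)
  have hT : (∏ j ∈ Finset.range n, (q : ℂ) ^ (j + 1)) ≠ 0 :=
    Finset.prod_ne_zero_iff.mpr fun j _ => pow_ne_zero _ hqc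
  have key : ∀ p : ℂ, p ≠ 0 → qpochInf (p * ((ζ * q ^ (-(n : ℤ)) : ℝ) : ℂ)) q =
      (-(p * ζ)) ^ n * (qpochInf (p * ζ) q * qpochC ((q : ℂ) / (p * ζ)) q n) /
        (∏ j ∈ Finset.range n, (q : ℂ) ^ (j + 1)) := by
    intro p hp
    rw [eq_div_iff hT, ← aux_shift q hq0 hq1 (p * ζ) (mul_ne_zero hp hζc) n]
    congr 2
    push_cast
    rw [zpow_neg, zpow_natCast, mul_assoc]
  have habs : ((|ζ * q ^ (-(n : ℤ))| : ℝ) : ℂ) = ((|ζ| : ℝ) : ℂ) * ((q : ℂ) ^ n)⁻¹ := by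
    rw [abs_mul, abs_of_pos (zpow_pos hq0 _)]
    push_cast
    rw [zpow_neg, zpow_natCast]
  unfold weightC
  simp only [Pi.div_apply]
  rw [key a ha, key b hb, key c hc, key d hd, habs]
  generalize qpochInf (a * ζ) q * qpochC ((q : ℂ) / (a * ζ)) q n = A
  generalize qpochInf (b * ζ) q * qpochC ((q : ℂ) / (b * ζ)) q n = B
  generalize qpochInf (c * ζ) q * qpochC ((q : ℂ) / (c * ζ)) q n = C
  generalize qpochInf (d * ζ) q * qpochC ((q : ℂ) / (d * ζ)) q n = D
  generalize (∏ j ∈ Finset.range n, (q : ℂ) ^ (j + 1)) = T at hT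
  generalize ((|ζ| : ℝ) : ℂ) = Z
  have h1 : (-(1 : ℂ)) ^ n ≠ 0 := pow_ne_zero _ (by norm_num)
  simp only [neg_pow (_ * _), mul_pow, div_pow]
  by_cases hC : C = 0
  · simp [hC]
  by_cases hD : D = 0
  · simp [hD]
  field_simp

end
end

section
/- For every N ≥ 1 and all signatures λ, ν ∈ ℤ^N (weakly decreasing integer vectors of length N), the following symmetry relation holds: S_{λ|N}(q^{ν₁+N−1}, q^{ν₂+N−2}, …, q^{ν_N}) / S_{λ|N}(q^{N−1}, q^{N−2}, …, 1) = S_{ν|N}(q^{λ₁+N−1}, q^{λ₂+N−2}, …, q^{λ_N}) / S_{ν|N}(q^{N−1}, q^{N−2}, …, 1). -/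
open scoped BigOperators
open Classical

noncomputable section

/-- The Schur Laurent polynomial S_{λ|N}(u) = det[u_j^{λ_i+N−i}] / ∏_{i<j}(u_i−u_j). -/
def schurL (N : ℕ) (l : Fin N → ℤ) (u : Fin N → ℝ) : ℝ :=
  (Matrix.of fun i j : Fin N => u j ^ (l i + (N : ℤ) - 1 - (i : ℕ))).det /
    ∏ p ∈ Finset.univ.filter (fun p : Fin N × Fin N => p.1 < p.2), (u p.1 - u p.2)

lemma schur_det_principal (q : ℝ) (N : ℕ) (a : Fin N → ℤ) :
    (Matrix.of fun i j : Fin N => (q ^ ((N : ℤ) - 1 - (j : ℕ))) ^ (a i)).det =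
      ∏ p ∈ Finset.univ.filter (fun p : Fin N × Fin N => p.1 < p.2), (q ^ a p.1 - q ^ a p.2) := by
  have h := Matrix.det_projVandermonde (fun _ : Fin N => (1 : ℝ)) (fun i => q ^ a i)
  have e : (Matrix.of fun i j : Fin N => (q ^ ((N : ℤ) - 1 - (j : ℕ))) ^ (a i)) =
      Matrix.projVandermonde (fun _ : Fin N => (1 : ℝ)) (fun i => q ^ a i) := by
    ext i j
    have hj := j.isLt
    have h2 : ((N : ℤ) - 1 - (j : ℕ)) = ((j.rev : ℕ) : ℤ) := by
      rw [Fin.val_rev]; omega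
    rw [Matrix.projVandermonde_apply, Matrix.of_apply, h2, zpow_natCast, one_pow, one_mul,
      ← zpow_natCast, ← zpow_natCast, ← zpow_mul, ← zpow_mul, mul_comm]
  rw [e, h, Finset.prod_filter, ← Finset.univ_product_univ, Finset.prod_product]
  refine Finset.prod_congr rfl fun i _ => ?_
  rw [← Finset.prod_filter]
  refine Finset.prod_congr ?_ fun j _ => by simp
  ext j; simp

/-- Symmetry relation for Schur polynomials: for signatures λ, ν ∈ ℤ^N,
S_{λ|N}(q^{ν+ε_N})/S_{λ|N}(q^{ε_N}) = S_{ν|N}(q^{λ+ε_N})/S_{ν|N}(q^{ε_N}),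
where ε_N = (N−1, N−2, …, 0). -/
theorem schur_symmetry (q : ℝ) (hq0 : 0 < q) (hq1 : q < 1) (N : ℕ) (hN : 1 ≤ N)
    (l ν : Fin N → ℤ) (hl : Antitone l) (hν : Antitone ν) :
    schurL N l (fun i => q ^ (ν i + (N : ℤ) - 1 - (i : ℕ))) /
        schurL N l (fun i => q ^ ((N : ℤ) - 1 - (i : ℕ)))
      = schurL N ν (fun i => q ^ (l i + (N : ℤ) - 1 - (i : ℕ))) /
          schurL N ν (fun i => q ^ ((N : ℤ) - 1 - (i : ℕ))) := by
  have hA : (Matrix.of fun i j : Fin N =>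
      (q ^ (ν j + (N : ℤ) - 1 - (j : ℕ))) ^ (l i + (N : ℤ) - 1 - (i : ℕ))).det =
      (Matrix.of fun i j : Fin N =>
      (q ^ (l j + (N : ℤ) - 1 - (j : ℕ))) ^ (ν i + (N : ℤ) - 1 - (i : ℕ))).det := by
    rw [← Matrix.det_transpose]
    congr 1
    ext i j
    rw [Matrix.transpose_apply, Matrix.of_apply, Matrix.of_apply, ← zpow_mul, ← zpow_mul, mul_comm]
  have h1 := schur_det_principal q N (fun i => l i + (N : ℤ) - 1 - (i : ℕ))
  have h2 := schur_det_principal q N (fun i => ν i + (N : ℤ) - 1 - (i : ℕ))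
  simp only [schurL]
  rw [hA, h1, h2, div_div_div_eq, div_div_div_eq]
  congr 1
  exact mul_comm _ _

end
end
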